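/- arXiv:2106.08949 — 2 statements merged into one kernel-verified Lean document; each statement's English description precedes it below -/
import Mathlib

section
/- Let d ≥ 1 be an integer, p ∈ [1,∞), α ∈ (0, 1/d), and let I ⊂ (0,∞) be σ-compact. Let (w(λ))_{λ∈I} be a continuous family of bounded positive weight sequences. Assume that for every compact I₀ ⊂ I there exist D₁, D₂, D₃ > 0 and an integer N ≥ 0 such that for all n ≥ N: (1) the map a ↦ Σ_{i=1}^n log(w_i(a)) is D₁·n^α-Lipschitz on I₀; and (2) inf_{a∈I₀} w_1(a)⋯w_n(a) ≥ D₂·exp(D₃·n^α). Then the family (B_{w(λ₁)} × ⋯ × B_{w(λ_d)})_{λ∈I^d} admits a common hypercyclic algebra on ℓp(ℕ)^d for the coordinatewise product. -/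
open scoped ENNReal
open Finset

noncomputable section

/-- The space `ℓᵖ(ℕ)` of `p`-summable complex sequences. -/
abbrev lpC (p : ℝ≥0∞) : Type := lp (fun _ : ℕ => ℂ) p

/-- `T` is the product operator `B_{w(lam 0)} × ⋯ × B_{w(lam (d-1))}` of weighted backward
shifts, the weight sequence of the `i`-th factor being `(w (lam i) n)_{n ≥ 1}`. -/
def IsProductShift (p : ℝ≥0∞) [Fact (1 ≤ p)] (d : ℕ) (w : ℝ → ℕ → ℝ)
    (T : (Fin d → lpC p) →L[ℂ] (Fin d → lpC p)) (lam : Fin d → ℝ) : Prop :=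
  ∀ (v : Fin d → lpC p) (i : Fin d) (n : ℕ),
    (T v) i n = (w (lam i) (n + 1) : ℂ) * v i (n + 1)

/-- The family `T lam`, `lam ∈ S`, admits a common hypercyclic algebra for the coordinatewise
product: there is a non-unital subalgebra `A ≠ {0}` of `(ℓᵖ(ℕ))^d` (closed under addition,
scalar multiplication and the componentwise coordinatewise product) every nonzero element of
which is a common hypercyclic vector for the family. -/
def CommonHypercyclicAlgebraCW (p : ℝ≥0∞) [Fact (1 ≤ p)] (d : ℕ) (S : Set (Fin d → ℝ))
    (T : (Fin d → ℝ) → ((Fin d → lpC p) →L[ℂ] (Fin d → lpC p))) : Prop :=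
  ∃ A : Set (Fin d → lpC p),
    (0 : Fin d → lpC p) ∈ A ∧
    (∀ x ∈ A, ∀ y ∈ A, x + y ∈ A) ∧
    (∀ (c : ℂ), ∀ x ∈ A, c • x ∈ A) ∧
    (∀ x ∈ A, ∀ y ∈ A, ∃ z ∈ A, ∀ (i : Fin d) (n : ℕ), z i n = x i n * y i n) ∧
    (∃ x ∈ A, x ≠ 0) ∧
    (∀ x ∈ A, x ≠ 0 → ∀ lam ∈ S, Dense (Set.range fun n : ℕ => ((T lam) ^ (n + 1)) x))


lemma aux_floor (b : ℕ) (hb : 1 ≤ b) (s z : ℝ) (hz : 0 ≤ z) (hzb : z ≤ b * s) :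
    ∃ e : Fin b, (e : ℝ) * s ≤ z ∧ z ≤ (e : ℝ) * s + s := by
  induction b, hb using Nat.le_induction with
  | base => exact ⟨0, by simp; exact hz, by simp at hzb ⊢; exact hzb⟩
  | succ n hn ih =>
    by_cases h : z ≤ n * s
    · obtain ⟨e, h1, h2⟩ := ih h
      exact ⟨e.castSucc, by simpa using h1, by simpa using h2⟩
    · refine ⟨Fin.last n, by simp; linarith, ?_⟩
      simp; push_cast at hzb; linarith

lemma sched (d b : ℕ) (hb : 1 ≤ b) (ρ : ℝ) (hρ : 0 < ρ) (J : ℕ) :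
    ∃ (ι : Type) (τ : ι → ℕ) (γ : ι → Fin d → ℝ),
      (∀ x, τ x < (2 * b ^ d) ^ J) ∧
      (∀ a : Fin d → ℝ, (∀ l, 0 ≤ a l ∧ a l ≤ ρ * b ^ J) →
        ∃ x, ∀ l, γ x l ≤ a l ∧ a l ≤ γ x l + ρ) ∧
      (∀ x l, 0 ≤ γ x l ∧ γ x l + ρ ≤ ρ * b ^ J) ∧
      (∀ x y, x ≠ y → ∃ j < J, (τ x + (2 * b ^ d) ^ j ≤ τ y ∨ τ y + (2 * b ^ d) ^ j ≤ τ x) ∧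
        ∀ l, |γ x l - γ y l| + ρ ≤ ρ * b ^ (j + 1)) := by
  induction J with
  | zero =>
    refine ⟨Unit, fun _ => 0, fun _ _ => 0, by simp, ?_, by simp, ?_⟩
    · intro a ha; exact ⟨(), fun l => by simpa using ha l⟩
    · intro x y h; exact absurd rfl h
  | succ J ih =>
    obtain ⟨ι, τ, γ, h1, h2, h3, h4⟩ := ih
    have hcard : Fintype.card (Fin d → Fin b) = b ^ d := by simp
    let enc : (Fin d → Fin b) ≃ Fin (b ^ d) := Fintype.equivFinOfCardEq hcard
    have hbJ : (0:ℝ) < ρ * b ^ J := by positivity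
    have hg : ∀ (e : Fin b) (z : ℝ), 0 ≤ z → z + ρ ≤ ρ * b ^ J →
        0 ≤ (e : ℝ) * (ρ * b ^ J) + z ∧ (e : ℝ) * (ρ * b ^ J) + z + ρ ≤ ρ * b ^ (J+1) := by
      intro e z hz hz'
      refine ⟨by positivity, ?_⟩
      have : ((e : ℕ) : ℝ) + 1 ≤ b := by exact_mod_cast e.2
      have := mul_le_mul_of_nonneg_right this hbJ.le
      rw [pow_succ]; linarith
    refine ⟨(Fin d → Fin b) × ι, fun x => 2 * (enc x.1 : ℕ) * (2 * b ^ d) ^ J + τ x.2,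
      fun x l => (x.1 l : ℝ) * (ρ * b ^ J) + γ x.2 l, ?_, ?_, ?_, ?_⟩
    · rintro ⟨e, x⟩
      have := h1 x
      have h5 : (enc e : ℕ) + 1 ≤ b ^ d := (enc e).2
      have h6 := Nat.mul_le_mul_right (2 * (2 * b ^ d) ^ J) h5
      simp only [pow_succ]
      nlinarith
    · intro a ha
      have : ∀ l, ∃ e : Fin b, (e : ℝ) * (ρ * b ^ J) ≤ a l ∧ a l ≤ (e : ℝ) * (ρ * b ^ J) + ρ * b ^ J := by
        intro l
        apply aux_floor b hb _ _ (ha l).1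
        have := (ha l).2
        rw [pow_succ] at this; linarith
      choose e he1 he2 using this
      obtain ⟨x, hx⟩ := h2 (fun l => a l - (e l : ℝ) * (ρ * b ^ J)) (fun l => ⟨by linarith [he1 l], by linarith [he2 l]⟩)
      exact ⟨(e, x), fun l => ⟨by linarith [(hx l).1], by linarith [(hx l).2]⟩⟩
    · rintro ⟨e, x⟩ l
      exact hg (e l) _ (h3 x l).1 (h3 x l).2
    · rintro ⟨e, x⟩ ⟨e', y⟩ hne
      by_cases hee : e = e'
      · subst hee
        obtain ⟨j, hj, h5, h6⟩ := h4 x y (by rintro rfl; exact hne rfl)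
        refine ⟨j, by omega, ?_, ?_⟩
        · rcases h5 with h5 | h5
          · left; simp only; omega
          · right; simp only; omega
        · intro l; simpa using h6 l
      · refine ⟨J, by omega, ?_, ?_⟩
        · have hx := h1 x
          have hy := h1 y
          have : (enc e : ℕ) ≠ enc e' := by
            intro h; exact hee (enc.injective (Fin.ext h))
          rcases Nat.lt_or_gt_of_ne this with h | h
          · left
            have h6 := Nat.mul_le_mul_right (2 * (2 * b ^ d) ^ J) h
            simp only [Nat.succ_eq_add_one] at *
            nlinarith
          · right
            have h6 := Nat.mul_le_mul_right (2 * (2 * b ^ d) ^ J) h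
            simp only [Nat.succ_eq_add_one] at *
            nlinarith
        · intro l
          have q1 := hg (e l) _ (h3 x l).1 (h3 x l).2
          have q2 := hg (e' l) _ (h3 y l).1 (h3 y l).2
          have : |((e l : ℕ) : ℝ) * (ρ * b ^ J) + γ x l - ((e' l : ℝ) * (ρ * b ^ J) + γ y l)| ≤ ρ * b ^ (J+1) - ρ := by
            rw [abs_le]; constructor <;> linarith
          simp only
          linarith

lemma exists_b (d : ℕ) (hd : 1 ≤ d) (α : ℝ) (hα1 : α < 1 / (d : ℝ)) :
    ∃ b : ℕ, 1 ≤ b ∧ ((2 * b ^ d : ℕ) : ℝ) ^ α ≤ b := by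
  have hd' : (0:ℝ) < d := by exact_mod_cast hd
  have hlt : α * d < 1 := by rwa [lt_div_iff₀ hd'] at hα1
  have h1 : Filter.Tendsto (fun b : ℕ => ((b : ℝ)) ^ (1 - α * d)) Filter.atTop Filter.atTop :=
    (tendsto_rpow_atTop (by linarith)).comp tendsto_natCast_atTop_atTop
  obtain ⟨b, hb, hb1⟩ := ((h1.eventually_ge_atTop ((2:ℝ) ^ α)).and (Filter.eventually_ge_atTop 1)).exists
  refine ⟨b, hb1, ?_⟩
  have hb0 : (0:ℝ) < b := by exact_mod_cast hb1
  push_cast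
  rw [Real.mul_rpow (by norm_num) (by positivity), ← Real.rpow_natCast (b:ℝ) d, ← Real.rpow_mul hb0.le]
  calc (2:ℝ) ^ α * (b:ℝ) ^ ((d:ℝ) * α) ≤ (b:ℝ) ^ (1 - α * d) * (b:ℝ) ^ ((d:ℝ) * α) := by gcongr
    _ = b := by
      rw [← Real.rpow_add hb0]
      have : 1 - α * d + d * α = 1 := by ring
      rw [this, Real.rpow_one]

lemma exp_summable (α c : ℝ) (hα : 0 < α) (hc : 0 < c) :
    Summable (fun n : ℕ => Real.exp (-c * (n : ℝ) ^ α)) := by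
  have h := (isLittleO_exp_neg_mul_rpow_atTop hc (-(2 / α)))
  have h2 : Filter.Tendsto (fun n : ℕ => (n : ℝ) ^ α) Filter.atTop Filter.atTop :=
    (tendsto_rpow_atTop hα).comp tendsto_natCast_atTop_atTop
  have h3 := (h.comp_tendsto h2).isBigO
  refine summable_of_isBigO_nat (g := fun n : ℕ => (n : ℝ) ^ (-2 : ℝ)) (Real.summable_nat_rpow.2 (by norm_num)) ?_
  refine h3.congr_right ?_
  intro n
  simp only [Function.comp]
  rw [← Real.rpow_mul (Nat.cast_nonneg n)]
  congr 1; field_simp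

lemma exp_tail (α c : ℝ) (hα : 0 < α) (hc : 0 < c) (ε : ℝ) (hε : 0 < ε) :
    ∃ Q : ℕ, ∀ s : Finset ℕ, (∀ j ∈ s, Q ≤ j) → ∑ j ∈ s, Real.exp (-c * (j : ℝ) ^ α) ≤ ε := by
  obtain ⟨s, hs⟩ := summable_iff_vanishing_norm.1 (exp_summable α c hα hc) ε hε
  refine ⟨s.sup id + 1, fun t ht => ?_⟩
  have := hs t (by
    rw [Finset.disjoint_left]
    intro a ha has
    have := ht a ha
    have := Finset.le_sup (f := id) has
    simp at this; omega)
  exact (le_abs_self _).trans this.le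

lemma unif_cont (K : Set ℝ) (hK : IsCompact K) (S : ℝ → ℕ → ℝ)
    (hcont : ∀ n, ContinuousOn (fun a => S a n) K) (τ : ℝ) (hτ : 0 < τ) (L : ℕ) :
    ∃ ρ > (0:ℝ), ∀ k < L, ∀ a ∈ K, ∀ b ∈ K, |a - b| ≤ ρ → |S a k - S b k| ≤ τ := by
  induction L with
  | zero => exact ⟨1, one_pos, by simp⟩
  | succ L ih =>
    obtain ⟨ρ, hρ, h⟩ := ih
    have := Metric.uniformContinuousOn_iff_le.1 (hK.uniformContinuousOn_of_continuous (hcont L)) τ hτ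
    obtain ⟨ρ', hρ', h'⟩ := this
    refine ⟨min ρ ρ', lt_min hρ hρ', ?_⟩
    intro k hk a ha b hb hab
    rcases Nat.lt_succ_iff_lt_or_eq.1 hk with hk | rfl
    · exact h k hk a ha b hb (hab.trans (min_le_left _ _))
    · exact h' a ha b hb (hab.trans (min_le_right _ _))

lemma exists_M {d : ℕ} (K : Set ℝ) (hK : IsCompact K) (S : ℝ → ℕ → ℝ)
    (hcont : ∀ n, ContinuousOn (fun a => S a n) K) (v : Fin d → ℕ → ℂ) (L : ℕ)
    (hv : ∀ l k, L ≤ k → v l k = 0) :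
    ∃ M > (0:ℝ), ∀ l k, ∀ a ∈ K, ‖v l k‖ * Real.exp (S a k) ≤ M := by
  have : ∀ k, ∃ C, ∀ a ∈ K, S a k ≤ C := by
    intro k
    obtain ⟨C, hC⟩ := hK.exists_bound_of_continuousOn (hcont k)
    exact ⟨C, fun a ha => (le_abs_self _).trans (hC a ha)⟩
  choose C hC using this
  refine ⟨∑ l, ∑ k ∈ range L, ‖v l k‖ * Real.exp (C k) + 1, by positivity, ?_⟩
  intro l k a ha
  by_cases hk : L ≤ k
  · rw [hv l k hk]; simp only [norm_zero, zero_mul]; positivity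
  · calc ‖v l k‖ * Real.exp (S a k) ≤ ‖v l k‖ * Real.exp (C k) := by gcongr; exact hC k a ha
      _ ≤ ∑ k ∈ range L, ‖v l k‖ * Real.exp (C k) :=
        Finset.single_le_sum (f := fun k => ‖v l k‖ * Real.exp (C k)) (fun i _ => by positivity)
          (by simpa using hk)
      _ ≤ ∑ l, ∑ k ∈ range L, ‖v l k‖ * Real.exp (C k) :=
        Finset.single_le_sum (f := fun l => ∑ k ∈ range L, ‖v l k‖ * Real.exp (C k))
          (fun i _ => by positivity) (Finset.mem_univ l)
      _ ≤ _ := by linarith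

lemma cexp_sub_one (x τ : ℝ) (h : |x| ≤ τ) (hτ : τ ≤ 1) : ‖((Real.exp x : ℝ) : ℂ) - 1‖ ≤ 2 * τ := by
  have := Real.abs_exp_sub_one_le (x := x) (h.trans hτ)
  rw [← Complex.ofReal_one, ← Complex.ofReal_sub, Complex.norm_real]
  exact this.trans (by linarith)

set_option maxHeartbeats 2000000 in
lemma block (d : ℕ) (α : ℝ) (hα0 : 0 < α) (b : ℕ) (hb1 : 1 ≤ b)
    (hb : ((2 * b ^ d : ℕ) : ℝ) ^ α ≤ b)
    (K : Set ℝ) (hK : IsCompact K) (S : ℝ → ℕ → ℝ)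
    (hcont : ∀ n, ContinuousOn (fun a => S a n) K)
    (D₁ D₃ E : ℝ) (hD₁ : 0 < D₁) (hD₃ : 0 < D₃) (Ns : ℕ)
    (h1 : ∀ n, Ns ≤ n → ∀ a ∈ K, ∀ b ∈ K, |S a n - S b n| ≤ D₁ * (n : ℝ) ^ α * |a - b|)
    (h2 : ∀ n, Ns ≤ n → ∀ a ∈ K, D₃ * (n : ℝ) ^ α - E ≤ S a n)
    (m : ℕ) (hm : 1 ≤ m) (v : Fin d → ℕ → ℂ) (L : ℕ) (hv : ∀ l k, L ≤ k → v l k = 0)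
    (ε : ℝ) (hε : 0 < ε) :
    ∃ r > (0:ℝ), ∀ (c : Fin d → ℝ) (N0 : ℕ) (δ : ℝ), 0 < δ →
      ∃ (N1 : ℕ) (u : Fin d → ℕ → ℂ), N0 ≤ N1 ∧ (∀ l q, u l q ≠ 0 → N0 ≤ q ∧ q < N1) ∧
        (∀ l, ∑ q ∈ range N1, ‖u l q‖ ≤ δ) ∧
        ∀ lam : Fin d → ℝ, (∀ l, lam l ∈ K ∧ c l ≤ lam l ∧ lam l ≤ c l + r) →
          ∃ n, N0 ≤ n ∧ n < N1 ∧ ∀ l N, ∑ j ∈ range N,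
            ‖((Real.exp (S (lam l) (n + j) - S (lam l) j) : ℝ) : ℂ) * u l (n + j) ^ m - v l j‖ ≤ ε := by
  obtain ⟨M, hM, hMv⟩ := exists_M K hK S hcont v L hv
  set H : ℕ := 2 * b ^ d with hH
  have hH2 : 2 ≤ H := by
    have : 1 ≤ b ^ d := Nat.one_le_pow _ _ hb1
    omega
  have hb0 : (0:ℝ) < b := by exact_mod_cast hb1
  have hHJ : ∀ J : ℕ, ((H:ℝ) ^ J) ^ α ≤ (b:ℝ) ^ J := by
    intro J
    rw [← Real.rpow_natCast, ← Real.rpow_mul (by positivity), mul_comm, Real.rpow_mul (by positivity),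
      Real.rpow_natCast]
    gcongr
  -- total size of the target
  obtain ⟨V, hV, hVv⟩ : ∃ V > (0:ℝ), ∀ l, ∑ j ∈ range L, ‖v l j‖ ≤ V := by
    refine ⟨∑ l, ∑ k ∈ range L, ‖v l k‖ + 1, by positivity, fun l => ?_⟩
    have := Finset.single_le_sum (f := fun l => ∑ k ∈ range L, ‖v l k‖)
          (fun i _ => by positivity) (Finset.mem_univ l)
    linarith
  obtain ⟨τ, hτ, hτ1, hτV⟩ : ∃ τ > (0:ℝ), τ ≤ 1 ∧ 2 * τ * V ≤ ε / 2 := by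
    refine ⟨min 1 (ε / (4 * V)), by positivity, min_le_left _ _, ?_⟩
    have : min 1 (ε / (4 * V)) ≤ ε / (4 * V) := min_le_right _ _
    calc 2 * min 1 (ε / (4 * V)) * V ≤ 2 * (ε / (4 * V)) * V := by gcongr
      _ = ε / 2 := by field_simp; norm_num
  set B : ℝ := M * Real.exp E with hBdef
  have hB : 0 < B := by positivity
  obtain ⟨Q, hQ⟩ := exp_tail α (D₃ / 2) hα0 (by positivity) (ε / 2 / B) (by positivity)
  obtain ⟨ρ₁, hρ₁, hρ₁S⟩ := unif_cont K hK S hcont (τ / 2) (by positivity) L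
  obtain ⟨q₀, hq₀Q, hq₀L, hq₀N, hq₀1⟩ : ∃ q₀ : ℕ, Q ≤ q₀ ∧ L ≤ q₀ ∧ Ns ≤ q₀ ∧ 1 ≤ q₀ :=
    ⟨Q + L + Ns + 1, by omega, by omega, by omega, by omega⟩
  have hq₀pos : (0:ℝ) < q₀ := by exact_mod_cast hq₀1
  obtain ⟨r, hr, hr1, hr2, hr3⟩ : ∃ r > (0:ℝ), r ≤ ρ₁ ∧ D₁ * (3 * q₀ : ℝ) ^ α * r ≤ τ / 2 ∧
      D₁ * (3 : ℝ) ^ α * (r * b) ≤ D₃ / 2 := by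
    refine ⟨min ρ₁ (min (τ / 2 / (D₁ * (3 * q₀ : ℝ) ^ α)) (D₃ / 2 / (D₁ * (3 : ℝ) ^ α * b))),
      by positivity, min_le_left _ _, ?_, ?_⟩
    · rw [← le_div_iff₀' (by positivity)]
      exact (min_le_right _ _).trans (min_le_left _ _)
    · have : D₁ * (3 : ℝ) ^ α * b * (min ρ₁ (min (τ / 2 / (D₁ * (3 * q₀ : ℝ) ^ α)) (D₃ / 2 / (D₁ * (3 : ℝ) ^ α * b)))) ≤ D₃ / 2 := by
        rw [← le_div_iff₀' (by positivity)]
        exact (min_le_right _ _).trans (min_le_right _ _)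
      linarith
  refine ⟨r, hr, ?_⟩
  intro c N0 δ hδ
  set B' : ℝ := max 1 B with hB'
  have hB'1 : 1 ≤ B' := le_max_left _ _
  obtain ⟨Q', hQ'⟩ := exp_tail α (D₃ / m) hα0 (by positivity) (δ / B') (by positivity)
  -- the number of levels
  obtain ⟨J, hJ⟩ : ∃ J : ℕ, N0 + Q' ≤ H ^ J := by
    exact ⟨N0 + Q', (Nat.lt_pow_self (by omega)).le⟩
  obtain ⟨ι, T, γ, s1, s2, s3, s4⟩ := sched d b hb1 (r / b ^ J) (by positivity) J
  rw [← hH] at s1 s4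
  have hrb : r / (b:ℝ) ^ J * b ^ J = r := by field_simp
  rw [hrb] at s2 s3
  -- time of an index
  set t : ι → ℕ := fun x => q₀ * (H ^ J + T x) with ht
  have hHJpos : 1 ≤ H ^ J := Nat.one_le_pow _ _ (by omega)
  have ht_lo : ∀ x, q₀ * H ^ J ≤ t x := fun x => Nat.mul_le_mul_left _ (by omega)
  have ht_hi : ∀ x, t x + q₀ ≤ 2 * (q₀ * H ^ J) := by
    intro x
    have := s1 x
    have h6 := Nat.mul_le_mul_left q₀ this
    simp only [ht, Nat.succ_eq_add_one] at *
    nlinarith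
  have hq₀H : q₀ ≤ q₀ * H ^ J := Nat.le_mul_of_pos_right _ hHJpos
  have hHq₀ : H ^ J ≤ q₀ * H ^ J := Nat.le_mul_of_pos_left _ hq₀1
  have htgap : ∀ x y, t x < t y → ∃ j < J, t x + q₀ * H ^ j ≤ t y ∧
      ∀ l, |γ x l - γ y l| + r / b ^ J ≤ r / b ^ J * b ^ (j + 1) := by
    intro x y hxy
    have hne : x ≠ y := by rintro rfl; exact lt_irrefl _ hxy
    obtain ⟨j, hj, h5, h6⟩ := s4 x y hne
    have hTxy : T x < T y := by
      by_contra hcon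
      push Not at hcon
      have := Nat.mul_le_mul_left q₀ (Nat.add_le_add_left hcon (H ^ J))
      simp only [ht] at hxy
      omega
    refine ⟨j, hj, ?_, h6⟩
    rcases h5 with h5 | h5
    · have := Nat.mul_le_mul_left q₀ h5
      simp only [ht]
      nlinarith
    · exfalso; have : 0 < H ^ j := by positivity
      omega
  have htne : ∀ x y, x ≠ y → t x ≠ t y := by
    intro x y hne heq
    obtain ⟨j, hj, h5, h6⟩ := s4 x y hne
    have hTT : T x = T y := by
      have := Nat.eq_of_mul_eq_mul_left (by omega) heq
      omega
    have : 0 < H ^ j := by positivity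
    omega
  have htgap' : ∀ x y, t x < t y → t x + q₀ ≤ t y := by
    intro x y hxy
    obtain ⟨j, _, h5, _⟩ := htgap x y hxy
    have : q₀ ≤ q₀ * H ^ j := Nat.le_mul_of_pos_right _ (by positivity)
    omega
  -- good indices
  let G : ι → Prop := fun x => ∃ μ : Fin d → ℝ, ∀ l, μ l ∈ K ∧ γ x l ≤ μ l - c l ∧
    μ l - c l ≤ γ x l + r / b ^ J
  have hGc : ∀ x : {x // G x}, ∃ μ : Fin d → ℝ, ∀ l, μ l ∈ K ∧ γ x l ≤ μ l - c l ∧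
    μ l - c l ≤ γ x l + r / b ^ J := fun x => x.2
  choose μ hμ using hGc
  have hroot : ∀ l k, ∃ ζ : ℂ, ζ ^ m = v l k := fun l k => IsAlgClosed.exists_pow_nat_eq _ (by omega)
  choose ζ hζ using hroot
  let φ : {x // G x} × Fin L → ℕ := fun p => t p.1 + p.2
  have hφ : Function.Injective φ := by
    rintro ⟨x, k⟩ ⟨y, k'⟩ h
    simp only [φ] at h
    have hk := k.2
    have hk' := k'.2
    have hxy : x = y := by
      by_contra hne
      have hne' : (x : ι) ≠ y := fun h => hne (Subtype.ext h)
      rcases Nat.lt_or_gt_of_ne (htne _ _ hne') with h5 | h5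
      · have := htgap' _ _ h5; omega
      · have := htgap' _ _ h5; omega
    subst hxy
    have : k = k' := Fin.ext (by omega)
    rw [this]
  let val : Fin d → {x // G x} × Fin L → ℂ := fun l p =>
    ζ l p.2 * ((Real.exp ((S (μ p.1 l) p.2 - S (μ p.1 l) (t p.1 + p.2)) / m) : ℝ) : ℂ)
  let u : Fin d → ℕ → ℂ := fun l => Function.extend φ (val l) 0
  have hm0 : (m : ℝ) ≠ 0 := by positivity
  have hu1 : ∀ l (x : {x // G x}) (k : ℕ), k < L → u l (t x + k) ^ m =
      v l k * ((Real.exp (S (μ x l) k - S (μ x l) (t x + k)) : ℝ) : ℂ) := by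
    intro l x k hk
    have : u l (t x + k) = val l (x, ⟨k, hk⟩) := hφ.extend_apply (val l) 0 (x, ⟨k, hk⟩)
    rw [this]
    simp only [val]
    rw [mul_pow, hζ, ← Complex.ofReal_pow, ← Real.exp_nat_mul]
    congr 4
    field_simp
  have hu0 : ∀ l q, u l q ≠ 0 → ∃ (x : {x // G x}) (k : ℕ), k < L ∧ q = t x + k := by
    intro l q hq
    by_contra hcon
    apply hq
    apply Function.extend_apply'
    rintro ⟨⟨x, k⟩, hxk⟩
    exact hcon ⟨x, k, k.2, hxk.symm⟩
  have hupow : ∀ l (x : {x // G x}) (k : ℕ), k < L →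
      ‖u l (t x + k)‖ ^ m ≤ B * Real.exp (- D₃ * ((t x + k : ℕ) : ℝ) ^ α) := by
    intro l x k hk
    rw [← norm_pow, hu1 l x k hk, norm_mul, Complex.norm_real, Real.norm_eq_abs, Real.abs_exp]
    have e1 := hMv l k _ (hμ x l).1
    have e2 := h2 (t x + k) (by have := ht_lo x; omega) _ (hμ x l).1
    calc ‖v l k‖ * Real.exp (S (μ x l) k - S (μ x l) (t x + k))
        = (‖v l k‖ * Real.exp (S (μ x l) k)) * Real.exp (- S (μ x l) (t x + k)) := by
          rw [mul_assoc, ← Real.exp_add]; rfl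
      _ ≤ M * Real.exp (E - D₃ * ((t x + k : ℕ) : ℝ) ^ α) := by
          gcongr; linarith
      _ = _ := by rw [hBdef, mul_assoc, ← Real.exp_add]; congr 2; ring
  have hubound : ∀ l q, u l q ≠ 0 → ‖u l q‖ ≤ B' * Real.exp (- (D₃ / m) * (q : ℝ) ^ α) := by
    intro l q hq
    obtain ⟨x, k, hk, rfl⟩ := hu0 l q hq
    refine le_of_pow_le_pow_left₀ (by omega : m ≠ 0) (by positivity) ?_
    refine (hupow l x k hk).trans ?_
    rw [mul_pow, ← Real.exp_nat_mul]
    have e3 : (m:ℝ) * (-(D₃ / m) * ((t x + k : ℕ) : ℝ) ^ α) = - D₃ * ((t x + k : ℕ) : ℝ) ^ α := by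
      field_simp
    rw [e3]
    gcongr
    calc B ≤ B' := le_max_right _ _
      _ ≤ B' ^ m := le_self_pow₀ hB'1 (by omega)
  have hurange : ∀ l q, u l q ≠ 0 → q₀ * H ^ J ≤ q ∧ q < 2 * (q₀ * H ^ J) := by
    intro l q hq
    obtain ⟨x, k, hk, rfl⟩ := hu0 l q hq
    have := ht_lo x
    have := ht_hi x
    omega
  refine ⟨2 * (q₀ * H ^ J), u, by omega, fun l q hq => ?_, fun l => ?_, ?_⟩
  · have := hurange l q hq
    omega
  · classical
    have e1 : ∑ q ∈ range (2 * (q₀ * H ^ J)), ‖u l q‖ =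
        ∑ q ∈ (range (2 * (q₀ * H ^ J))).filter (fun q => u l q ≠ 0), ‖u l q‖ := by
      symm
      apply Finset.sum_filter_of_ne
      intro q _ hq h0
      exact hq (by rw [h0, norm_zero])
    rw [e1]
    calc ∑ q ∈ (range (2 * (q₀ * H ^ J))).filter (fun q => u l q ≠ 0), ‖u l q‖
        ≤ ∑ q ∈ (range (2 * (q₀ * H ^ J))).filter (fun q => u l q ≠ 0),
            B' * Real.exp (- (D₃ / m) * (q : ℝ) ^ α) :=
          Finset.sum_le_sum fun q hq => hubound l q (Finset.mem_filter.1 hq).2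
      _ ≤ B' * (δ / B') := by
          rw [← Finset.mul_sum]
          refine mul_le_mul_of_nonneg_left (hQ' _ ?_) (by positivity)
          intro q hq
          have := hurange l q (Finset.mem_filter.1 hq).2
          omega
      _ = δ := by field_simp
  · intro lam hlam
    obtain ⟨x₀, hx₀⟩ := s2 (fun l => lam l - c l)
      (fun l => ⟨by linarith [(hlam l).2.1], by linarith [(hlam l).2.2]⟩)
    let x : {x // G x} := ⟨x₀, lam, fun l => ⟨(hlam l).1, hx₀ l⟩⟩
    have hxt : t x = t x₀ := rfl
    refine ⟨t x, by have := ht_lo x; omega, by have := ht_hi x; omega, fun l N => ?_⟩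
    -- termwise estimates
    have hmain : ∀ j < L, ‖((Real.exp (S (lam l) (t x + j) - S (lam l) j) : ℝ) : ℂ) *
        u l (t x + j) ^ m - v l j‖ ≤ ‖v l j‖ * (2 * τ) := by
      intro j hj
      rw [hu1 l x j hj]
      have hdist : |lam l - μ x l| ≤ r / b ^ J := by
        have e1 := hx₀ l
        have e2 := (hμ x l).2
        have e3 : γ (x : ι) l = γ x₀ l := rfl
        rw [e3] at e2
        rw [abs_le]; constructor <;> linarith
      have hdist' : |lam l - μ x l| ≤ ρ₁ := by
        refine hdist.trans (le_trans ?_ hr1)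
        apply div_le_self hr.le
        exact one_le_pow₀ (by exact_mod_cast hb1)
      have e4 := hρ₁S j hj _ (hlam l).1 _ (hμ x l).1 hdist'
      have e5 : |S (lam l) (t x + j) - S (μ x l) (t x + j)| ≤ τ / 2 := by
        refine (h1 (t x + j) (by have := ht_lo x; omega) _ (hlam l).1 _ (hμ x l).1).trans ?_
        refine le_trans ?_ hr2
        have e6 : ((t x + j : ℕ) : ℝ) ≤ 3 * q₀ * (H:ℝ) ^ J := by
          have := ht_hi x
          have : t x + j ≤ 3 * q₀ * H ^ J := by nlinarith
          exact_mod_cast this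
        calc D₁ * ((t x + j : ℕ) : ℝ) ^ α * |lam l - μ x l|
            ≤ D₁ * (3 * q₀ * (H:ℝ) ^ J) ^ α * (r / b ^ J) := by gcongr
          _ = D₁ * (3 * q₀ : ℝ) ^ α * r * (((H:ℝ) ^ J) ^ α / b ^ J) := by
            rw [Real.mul_rpow (by positivity) (by positivity)]; ring
          _ ≤ D₁ * (3 * q₀ : ℝ) ^ α * r * 1 := by
            gcongr
            exact div_le_one_of_le₀ (hHJ J) (by positivity)
          _ = _ := by ring
      have e7 : ((Real.exp (S (lam l) (t x + j) - S (lam l) j) : ℝ) : ℂ) *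
          (v l j * ((Real.exp (S (μ x l) j - S (μ x l) (t x + j)) : ℝ) : ℂ)) - v l j =
          v l j * (((Real.exp ((S (lam l) (t x + j) - S (μ x l) (t x + j)) - (S (lam l) j - S (μ x l) j)) : ℝ) : ℂ) - 1) := by
        have : (S (lam l) (t x + j) - S (μ x l) (t x + j)) - (S (lam l) j - S (μ x l) j) =
          (S (lam l) (t x + j) - S (lam l) j) + (S (μ x l) j - S (μ x l) (t x + j)) := by ring
        rw [this, Real.exp_add]; push_cast; ring
      rw [e7, norm_mul]
      gcongr
      apply cexp_sub_one _ _ _ hτ1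
      refine (abs_sub _ _).trans ?_
      linarith
    have hfar : ∀ j, L ≤ j → u l (t x + j) ≠ 0 → Q ≤ j ∧ ‖((Real.exp (S (lam l) (t x + j) - S (lam l) j) : ℝ) : ℂ) *
        u l (t x + j) ^ m - v l j‖ ≤ B * Real.exp (- (D₃ / 2) * (j : ℝ) ^ α) := by
      intro j hj hne
      obtain ⟨y, k, hk, hyk⟩ := hu0 l _ hne
      have hlt : t x < t y := by
        by_contra hcon
        push Not at hcon
        rcases Nat.lt_or_eq_of_le hcon with h5 | h5
        · have := htgap' _ _ h5; omega
        · omega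
      obtain ⟨i, hi, h5, h6⟩ := htgap _ _ hlt
      have hqi : q₀ ≤ q₀ * H ^ i := Nat.le_mul_of_pos_right _ (by positivity)
      refine ⟨by omega, ?_⟩
      rw [hv l j hj, sub_zero, hyk, hu1 l y k hk, norm_mul, norm_mul, Complex.norm_real, Complex.norm_real,
        Real.norm_eq_abs, Real.abs_exp, Real.norm_eq_abs, Real.abs_exp]
      have e1 := hMv l k _ (hμ y l).1
      have e2 := h2 j (by omega) _ (hlam l).1
      have hdist : |lam l - μ y l| ≤ r / b ^ J * b ^ (i + 1) := by
        refine le_trans ?_ (h6 l)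
        have e1 := hx₀ l
        have e2 := (hμ y l).2
        have e3 : γ (x : ι) l = γ x₀ l := rfl
        rw [e3]
        have e4 := le_abs_self (γ x₀ l - γ y l)
        have e5 := neg_abs_le (γ x₀ l - γ y l)
        rw [abs_le]; constructor <;> linarith
      have e5 : |S (lam l) (t y + k) - S (μ y l) (t y + k)| ≤ D₃ / 2 * (j:ℝ) ^ α := by
        refine (h1 (t y + k) (by have := ht_lo y; omega) _ (hlam l).1 _ (hμ y l).1).trans ?_
        have e6 : ((t y + k : ℕ) : ℝ) ≤ 3 * (q₀ * (H:ℝ) ^ i) * (H:ℝ) ^ (J - i) := by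
          have := ht_hi y
          have : t y + k ≤ 3 * (q₀ * H ^ J) := by nlinarith
          have e8 : H ^ J = H ^ i * H ^ (J - i) := by rw [← pow_add]; congr 1; omega
          rw [e8] at this
          have : t y + k ≤ 3 * (q₀ * H ^ i) * H ^ (J - i) := by linarith
          exact_mod_cast this
        have e9 : (q₀ * (H:ℝ) ^ i) ≤ j := by
          have : q₀ * H ^ i ≤ j := by omega
          exact_mod_cast this
        have e10 : (b:ℝ) ^ J = b ^ i * b ^ (J - i) := by rw [← pow_add]; congr 1; omega
        calc D₁ * ((t y + k : ℕ) : ℝ) ^ α * |lam l - μ y l|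
            ≤ D₁ * (3 * (q₀ * (H:ℝ) ^ i) * (H:ℝ) ^ (J - i)) ^ α * (r / b ^ J * b ^ (i + 1)) := by gcongr
          _ = D₁ * (3 : ℝ) ^ α * (r * b) * (q₀ * (H:ℝ) ^ i) ^ α * (((H:ℝ) ^ (J - i)) ^ α / b ^ (J - i)) := by
            rw [Real.mul_rpow (by positivity) (by positivity), Real.mul_rpow (by positivity) (by positivity), e10, pow_succ]
            field_simp
          _ ≤ D₃ / 2 * (j : ℝ) ^ α * 1 := by
            gcongr
            exact div_le_one_of_le₀ (hHJ _) (by positivity)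
          _ = _ := by ring
      have e5' := (le_abs_self _).trans e5
      calc Real.exp (S (lam l) (t y + k) - S (lam l) j) * (‖v l k‖ * Real.exp (S (μ y l) k - S (μ y l) (t y + k)))
          = (‖v l k‖ * Real.exp (S (μ y l) k)) * Real.exp ((S (lam l) (t y + k) - S (μ y l) (t y + k)) - S (lam l) j) := by
            rw [mul_left_comm, mul_assoc, ← Real.exp_add, ← Real.exp_add]; congr 2; ring
        _ ≤ M * Real.exp (E - D₃ / 2 * (j : ℝ) ^ α) := by
            refine mul_le_mul e1 (Real.exp_le_exp.2 ?_) (Real.exp_pos _).le hM.le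
            linarith
        _ = _ := by rw [hBdef, mul_assoc, ← Real.exp_add]; congr 2; ring
    classical
    set f : ℕ → ℝ := fun j => ‖((Real.exp (S (lam l) (t x + j) - S (lam l) j) : ℝ) : ℂ) *
        u l (t x + j) ^ m - v l j‖ with hf
    have hf0 : ∀ j, L ≤ j → u l (t x + j) = 0 → f j = 0 := by
      intro j hj h0
      simp only [hf, h0, hv l j hj, zero_pow (by omega : m ≠ 0), mul_zero, sub_zero, norm_zero]
    rw [← Finset.sum_filter_add_sum_filter_not (range N) (fun j => j < L)]
    have p1 : ∑ j ∈ (range N).filter (fun j => j < L), f j ≤ ε / 2 := by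
      calc ∑ j ∈ (range N).filter (fun j => j < L), f j
          ≤ ∑ j ∈ (range N).filter (fun j => j < L), ‖v l j‖ * (2 * τ) :=
            Finset.sum_le_sum fun j hj => hmain j (Finset.mem_filter.1 hj).2
        _ ≤ ∑ j ∈ range L, ‖v l j‖ * (2 * τ) :=
            Finset.sum_le_sum_of_subset_of_nonneg
              (fun j hj => by simpa using (Finset.mem_filter.1 hj).2) (fun _ _ _ => by positivity)
        _ ≤ V * (2 * τ) := by rw [← Finset.sum_mul]; gcongr; exact hVv l
        _ ≤ ε / 2 := by linarith
    have p2 : ∑ j ∈ (range N).filter (fun j => ¬ j < L), f j ≤ ε / 2 := by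
      calc ∑ j ∈ (range N).filter (fun j => ¬ j < L), f j
          = ∑ j ∈ ((range N).filter (fun j => ¬ j < L)).filter (fun j => u l (t x + j) ≠ 0), f j := by
            symm
            apply Finset.sum_filter_of_ne
            intro j hj hfj h0
            exact hfj (hf0 j (by simpa using (Finset.mem_filter.1 hj).2) h0)
        _ ≤ ∑ j ∈ ((range N).filter (fun j => ¬ j < L)).filter (fun j => u l (t x + j) ≠ 0),
              B * Real.exp (- (D₃ / 2) * (j : ℝ) ^ α) := by
            refine Finset.sum_le_sum fun j hj => ?_
            obtain ⟨hj1, hj2⟩ := Finset.mem_filter.1 hj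
            exact (hfar j (by simpa using (Finset.mem_filter.1 hj1).2) hj2).2
        _ ≤ B * (ε / 2 / B) := by
            rw [← Finset.mul_sum]
            refine mul_le_mul_of_nonneg_left (hQ _ ?_) hB.le
            intro j hj
            obtain ⟨hj1, hj2⟩ := Finset.mem_filter.1 hj
            exact (hfar j (by simpa using (Finset.mem_filter.1 hj1).2) hj2).1
        _ = ε / 2 := by field_simp
    linarith

lemma assemble (d : ℕ) (Task : Type) [Countable Task] [Nonempty Task] (S : ℝ → ℕ → ℝ)
    (Λ : Task → Set (Fin d → ℝ)) (m : Task → ℕ) (v : Task → Fin d → ℕ → ℂ) (ε : Task → ℝ)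
    (hblock : ∀ (t : Task) (N0 : ℕ) (δ : ℝ), 0 < δ →
      ∃ (N1 : ℕ) (u : Fin d → ℕ → ℂ), N0 ≤ N1 ∧ (∀ l q, u l q ≠ 0 → N0 ≤ q ∧ q < N1) ∧
        (∀ l, ∑ q ∈ range N1, ‖u l q‖ ≤ δ) ∧
        ∀ lam ∈ Λ t, ∃ n, N0 ≤ n ∧ n < N1 ∧ ∀ l N, ∑ j ∈ range N,
            ‖((Real.exp (S (lam l) (n + j) - S (lam l) j) : ℝ) : ℂ) * u l (n + j) ^ m t - v t l j‖ ≤ ε t) :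
    ∃ X : Fin d → ℕ → ℂ, (∀ l N, ∑ q ∈ range N, ‖X l q‖ ≤ 1) ∧
      ∀ (t : Task) (η : ℝ), 0 < η → ∀ C : ℝ, 1 ≤ C → ∀ lam ∈ Λ t,
        ∃ n, 1 ≤ n ∧ ∃ U Y : Fin d → ℕ → ℂ,
          (∀ l j, (X l (n + j) = U l j ∧ Y l j = 0) ∨ (U l j = 0 ∧ X l (n + j) = Y l j)) ∧
          (∀ l j, ‖U l j‖ ≤ η) ∧
          (∀ l N, ∑ j ∈ range N,
            ‖((Real.exp (S (lam l) (n + j) - S (lam l) j) : ℝ) : ℂ) * U l j ^ m t - v t l j‖ ≤ ε t) ∧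
          (∀ l N, C ^ n * ∑ j ∈ range N, ‖Y l j‖ ≤ η) := by
  classical
  obtain ⟨e, he⟩ := exists_surjective_nat (Task × ℕ)
  have hinf : ∀ (t : Task) (s₀ : ℕ), ∃ s > s₀, (e s).1 = t := by
    intro t s₀
    have : ({s | (e s).1 = t} : Set ℕ).Infinite := by
      apply Set.Infinite.of_image (fun s => (e s).2)
      have : (fun s => (e s).2) '' {s | (e s).1 = t} = Set.univ := by
        ext k
        simp only [Set.mem_image, Set.mem_ofPred_eq, Set.mem_univ, iff_true]
        obtain ⟨s, hs⟩ := he (t, k)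
        exact ⟨s, by rw [hs], by rw [hs]⟩
      rw [this]; exact Set.infinite_univ
    obtain ⟨s, hs, h⟩ := this.exists_gt s₀
    exact ⟨s, h, hs⟩
  choose N1 u hN hsupp hsmall happ using hblock
  let δ : ℕ → ℕ → ℝ := fun s N => (1/2) ^ (s+1) / ((s:ℝ)+1) ^ N
  have hδ : ∀ s N, 0 < δ s N := fun s N => by simp only [δ]; positivity
  let Ns : ℕ → ℕ := fun s => Nat.rec 0 (fun s N => N1 (e s).1 (N+1) (δ s N) (hδ s N)) s
  have hNs : ∀ s, Ns (s+1) = N1 (e s).1 (Ns s+1) (δ s (Ns s)) (hδ s (Ns s)) := fun s => rfl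
  let W : ℕ → Fin d → ℕ → ℂ := fun s => u (e s).1 (Ns s+1) (δ s (Ns s)) (hδ s (Ns s))
  have hNlt : ∀ s, Ns s + 1 ≤ Ns (s+1) := fun s => by rw [hNs]; exact hN _ _ _ _
  have hNmono : StrictMono Ns := strictMono_nat_of_lt_succ (fun s => hNlt s)
  have hWs : ∀ s l q, W s l q ≠ 0 → Ns s + 1 ≤ q ∧ q < Ns (s+1) := by
    intro s l q h
    exact hsupp _ _ _ (hδ s (Ns s)) l q h
  have hWsm : ∀ s l, ∑ q ∈ range (Ns (s+1)), ‖W s l q‖ ≤ δ s (Ns s) := by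
    intro s l
    exact hsmall _ _ _ (hδ s (Ns s)) l
  let X : Fin d → ℕ → ℂ := fun l q => ∑ s ∈ range (q+1), W s l q
  have hX : ∀ s l q, Ns s ≤ q → q < Ns (s+1) → X l q = W s l q := by
    intro s l q h1 h2
    apply Finset.sum_eq_single
    · intro s' _ hne
      by_contra h
      have := hWs s' l q h
      rcases Nat.lt_or_gt_of_ne hne with h3 | h3
      · have := hNmono.monotone (show s' + 1 ≤ s from h3); omega
      · have := hNmono.monotone (show s + 1 ≤ s' from h3); omega
    · intro h
      have := hNmono.id_le s
      simp only [id, mem_range] at this h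
      omega
  have hsum : ∀ l a κ, (∀ s, a ≤ s → δ s (Ns s) ≤ κ * (1/2) ^ (s+1)) → ∀ b, a ≤ b →
      ∑ q ∈ Ico (Ns a) (Ns b), ‖X l q‖ ≤ κ * ((1/2) ^ a - (1/2) ^ b) := by
    intro l a κ hκ b hab
    induction b, hab using Nat.le_induction with
    | base => simp
    | succ b hab ih =>
      rw [← Finset.sum_Ico_consecutive _ (hNmono.monotone hab) (hNmono.monotone (Nat.le_succ b))]
      have h1 : ∑ q ∈ Ico (Ns b) (Ns (b+1)), ‖X l q‖ ≤ κ * (1/2) ^ (b+1) := by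
        refine le_trans ?_ (hκ b hab)
        refine le_trans ?_ (hWsm b l)
        calc ∑ q ∈ Ico (Ns b) (Ns (b+1)), ‖X l q‖ = ∑ q ∈ Ico (Ns b) (Ns (b+1)), ‖W b l q‖ := by
              apply Finset.sum_congr rfl
              intro q hq
              rw [Finset.mem_Ico] at hq
              rw [hX b l q hq.1 hq.2]
          _ ≤ _ := Finset.sum_le_sum_of_subset_of_nonneg
              (fun q hq => by rw [Finset.mem_Ico] at hq; simpa using hq.2) (fun _ _ _ => norm_nonneg _)
      rw [pow_succ] at h1 ⊢
      linarith
  refine ⟨X, ?_, ?_⟩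
  · intro l N
    have h0 : Ns 0 = 0 := rfl
    have h1 := hsum l 0 1 (by
      intro s _
      simp only [δ, one_mul]
      apply div_le_self (by positivity)
      apply one_le_pow₀
      have : (0:ℝ) ≤ s := by positivity
      linarith) N (Nat.zero_le _)
    have h2 : ∑ q ∈ range N, ‖X l q‖ ≤ ∑ q ∈ Ico (Ns 0) (Ns N), ‖X l q‖ := by
      apply Finset.sum_le_sum_of_subset_of_nonneg
      · intro q hq
        have := hNmono.id_le N
        simp only [id, Finset.mem_range, Finset.mem_Ico] at *
        omega
      · intros; positivity
    have : (0:ℝ) < (1/2) ^ N := by positivity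
    simp only [pow_zero] at h1
    linarith
  · intro t η hη C hC lam hlam
    obtain ⟨s₁, hs₁⟩ := exists_nat_ge C
    obtain ⟨s₂, hs₂⟩ := exists_pow_lt_of_lt_one hη (show (1/2 : ℝ) < 1 by norm_num)
    obtain ⟨s, hs, rfl⟩ := hinf t (s₁ + s₂)
    have hsC : C ≤ (s:ℝ) + 1 := by
      have : (s₁:ℝ) ≤ s := by exact_mod_cast (by omega : s₁ ≤ s)
      linarith
    have hsη : (1/2 : ℝ) ^ (s+1) ≤ η := by
      refine le_trans ?_ hs₂.le
      apply pow_le_pow_of_le_one (by norm_num) (by norm_num) (by omega)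
    obtain ⟨n, hn1, hn2, hn3⟩ := happ (e s).1 (Ns s+1) (δ s (Ns s)) (hδ s (Ns s)) lam hlam
    rw [← hNs] at hn2
    refine ⟨n, by omega, fun l j => W s l (n+j), fun l j => if n + j < Ns (s+1) then 0 else X l (n+j), ?_, ?_, hn3, ?_⟩
    · intro l j
      by_cases h : n + j < Ns (s+1)
      · left
        simp only [h, if_true]
        exact ⟨hX s l _ (by omega) h, trivial⟩
      · right
        simp only [h, if_false, and_true]
        by_contra h'
        exact h (hWs s l _ h').2
    · intro l j
      change ‖W s l (n+j)‖ ≤ η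
      by_cases h : W s l (n+j) = 0
      · rw [h, norm_zero]; exact hη.le
      · have h1 := (hWs s l _ h).2
        have h2 := Finset.single_le_sum (f := fun q => ‖W s l q‖) (fun i _ => norm_nonneg _) (Finset.mem_range.2 h1)
        refine h2.trans ((hWsm s l).trans (le_trans ?_ hsη))
        simp only [δ]
        apply div_le_self (by positivity)
        apply one_le_pow₀
        have : (0:ℝ) ≤ s := by positivity
        linarith
    · intro l N
      have hs1 : (1:ℝ) ≤ (s:ℝ) + 1 := by
        have : (0:ℝ) ≤ s := by positivity
        linarith
      have h1 := hsum l (s+1) (1 / ((s:ℝ)+1) ^ (Ns (s+1))) (by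
        intro s' hs'
        simp only [δ]
        rw [div_mul_eq_mul_div, one_mul]
        apply div_le_div_of_nonneg_left (by positivity) (by positivity)
        have h5 : (s:ℝ) ≤ s' := by exact_mod_cast (by omega : s ≤ s')
        calc ((s:ℝ)+1) ^ (Ns (s+1)) ≤ ((s:ℝ)+1) ^ (Ns s') := pow_le_pow_right₀ hs1 (hNmono.monotone hs')
          _ ≤ _ := by gcongr) (s + 1 + n + N) (by omega)
      have h2 : ∑ j ∈ range N, ‖(if n + j < Ns (s+1) then 0 else X l (n+j))‖ ≤
          ∑ q ∈ Ico (Ns (s+1)) (Ns (s+1+n+N)), ‖X l q‖ := by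
        have h3 := Finset.sum_Ico_eq_sum_range (fun q => ‖(if q < Ns (s+1) then 0 else X l q)‖) n (n+N)
        rw [Nat.add_sub_cancel_left] at h3
        rw [← h3]
        have h4 : ∑ q ∈ Ico n (n+N), ‖(if q < Ns (s+1) then 0 else X l q)‖ =
            ∑ q ∈ (Ico n (n+N)).filter (fun q => ¬ q < Ns (s+1)), ‖X l q‖ := by
          rw [Finset.sum_filter]
          apply Finset.sum_congr rfl
          intro q _
          by_cases h : q < Ns (s+1) <;> simp [h]
        rw [h4]
        apply Finset.sum_le_sum_of_subset_of_nonneg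
        · intro q hq
          have := hNmono.id_le (s+1+n+N)
          simp only [id, Finset.mem_filter, Finset.mem_Ico] at *
          omega
        · intros; positivity
      have h6 : C ^ n ≤ ((s:ℝ)+1) ^ (Ns (s+1)) :=
        calc C ^ n ≤ ((s:ℝ)+1) ^ n := by gcongr
          _ ≤ _ := pow_le_pow_right₀ hs1 hn2.le
      calc C ^ n * ∑ j ∈ range N, ‖(if n + j < Ns (s+1) then 0 else X l (n+j))‖
          ≤ ((s:ℝ)+1) ^ (Ns (s+1)) * (1 / ((s:ℝ)+1) ^ (Ns (s+1)) * ((1/2) ^ (s+1) - (1/2) ^ (s+1+n+N))) := by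
            apply mul_le_mul h6 (h2.trans h1) (by positivity) (by positivity)
        _ = (1/2) ^ (s+1) - (1/2) ^ (s+1+n+N) := by field_simp
        _ ≤ (1/2) ^ (s+1) := by
          have : (0:ℝ) < (1/2) ^ (s+1+n+N) := by positivity
          linarith
        _ ≤ η := hsη

lemma poly_low (P : Polynomial ℂ) (hP : P ≠ 0) (h0 : P.coeff 0 = 0) :
    ∃ m, 1 ≤ m ∧ ∃ c : ℂ, c ≠ 0 ∧ ∃ A : ℝ, 0 ≤ A ∧ ∀ z : ℂ, ‖z‖ ≤ 1 →
      ‖P.eval z - c * z ^ m‖ ≤ A * ‖z‖ ^ (m+1) := by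
  classical
  set m := P.natTrailingDegree with hm
  have hdvd : (Polynomial.X : Polynomial ℂ) ^ (m+1) ∣ P - Polynomial.C P.trailingCoeff * Polynomial.X ^ m := by
    rw [Polynomial.X_pow_dvd_iff]
    intro k hk
    rw [Polynomial.coeff_sub, Polynomial.coeff_C_mul, Polynomial.coeff_X_pow]
    rcases Nat.lt_succ_iff_lt_or_eq.1 hk with h | rfl
    · rw [Polynomial.coeff_eq_zero_of_lt_natTrailingDegree h, if_neg (by omega)]; simp
    · simp [Polynomial.trailingCoeff, hm]
  obtain ⟨R, hR⟩ := hdvd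
  have hc : P.trailingCoeff ≠ 0 := Polynomial.trailingCoeff_nonzero_iff_nonzero.2 hP
  obtain ⟨A, hA⟩ := (isCompact_closedBall (0:ℂ) 1).exists_bound_of_continuousOn
    (f := fun z => R.eval z) R.continuous.continuousOn
  refine ⟨m, ?_, P.trailingCoeff, hc, A, ?_, ?_⟩
  · by_contra hcon
    have : m = 0 := by omega
    apply hc
    rw [Polynomial.trailingCoeff, ← hm, this, h0]
  · exact (norm_nonneg _).trans (hA 0 (by simp))
  · intro z hz
    have := congrArg (Polynomial.eval z) hR
    simp only [Polynomial.eval_sub, Polynomial.eval_mul, Polynomial.eval_C, Polynomial.eval_pow, Polynomial.eval_X] at this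
    rw [this, norm_mul, norm_pow, mul_comm]
    gcongr
    exact hA z (by simpa using hz)

lemma poly_lin (P : Polynomial ℂ) (h0 : P.coeff 0 = 0) :
    ∃ A : ℝ, 0 ≤ A ∧ ∀ z : ℂ, ‖z‖ ≤ 1 → ‖P.eval z‖ ≤ A * ‖z‖ := by
  by_cases hP : P = 0
  · exact ⟨0, le_rfl, fun z _ => by simp [hP]⟩
  obtain ⟨R, hR⟩ := Polynomial.X_dvd_iff.2 h0
  obtain ⟨A, hA⟩ := (isCompact_closedBall (0:ℂ) 1).exists_bound_of_continuousOn
    (f := fun z => R.eval z) R.continuous.continuousOn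
  refine ⟨A, (norm_nonneg _).trans (hA 0 (by simp)), fun z hz => ?_⟩
  rw [hR, Polynomial.eval_mul, Polynomial.eval_X, norm_mul, mul_comm]
  gcongr
  exact hA z (by simpa using hz)

lemma estimate (e : ℕ → ℝ) (he0 : ∀ j, 0 ≤ e j) (Cn : ℝ) (heC : ∀ j, e j ≤ Cn)
    (x U Y v v0 : ℕ → ℂ) (m : ℕ) (hm : 1 ≤ m) (f : ℂ → ℂ) (c : ℂ) (A : ℝ) (hA : 0 ≤ A)
    (hf : ∀ z : ℂ, ‖z‖ ≤ 1 → ‖f z - c * z ^ m‖ ≤ A * ‖z‖ ^ (m+1))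
    (η ε V ε' : ℝ) (hη : 0 ≤ η) (hx1 : ∀ j, ‖x j‖ ≤ 1)
    (hsplit : ∀ j, (x j = U j ∧ Y j = 0) ∨ (U j = 0 ∧ x j = Y j))
    (hU : ∀ j, ‖U j‖ ≤ η) (N : ℕ)
    (h1 : ∑ j ∈ range N, ‖((e j : ℝ) : ℂ) * U j ^ m - v j‖ ≤ ε)
    (h2 : Cn * ∑ j ∈ range N, ‖Y j‖ ≤ η)
    (h3 : ∑ j ∈ range N, ‖v j‖ ≤ V)
    (h4 : ∑ j ∈ range N, ‖c * v j - v0 j‖ ≤ ε') :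
    ∑ j ∈ range N, ‖((e j : ℝ) : ℂ) * f (x j) - v0 j‖ ≤
      A * η * (ε + V) + ‖c‖ * ε + ε' + (‖c‖ + A) * η := by
  have key : ∀ j, ‖((e j : ℝ) : ℂ) * f (x j) - v0 j‖ ≤
      A * η * (‖((e j : ℝ) : ℂ) * U j ^ m - v j‖ + ‖v j‖) + ‖c‖ * ‖((e j : ℝ) : ℂ) * U j ^ m - v j‖
      + ‖c * v j - v0 j‖ + (‖c‖ + A) * (Cn * ‖Y j‖) := by
    intro j
    have hCn : 0 ≤ Cn := (he0 j).trans (heC j)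
    rcases hsplit j with ⟨hx, hY⟩ | ⟨hU0, hx⟩
    · have hx1 := hx1 j
      rw [hx] at hx1
      rw [hx, hY, norm_zero, mul_zero, mul_zero, add_zero]
      have e1 : ((e j : ℝ) : ℂ) * f (U j) - v0 j = ((e j : ℝ) : ℂ) * (f (U j) - c * U j ^ m) +
          c * (((e j : ℝ) : ℂ) * U j ^ m - v j) + (c * v j - v0 j) := by ring
      rw [e1]
      refine (norm_add₃_le).trans ?_
      rw [norm_mul c]
      gcongr
      rw [norm_mul, Complex.norm_real, Real.norm_eq_abs, abs_of_nonneg (he0 j)]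
      have e2 : ‖((e j : ℝ) : ℂ) * U j ^ m‖ ≤ ‖((e j : ℝ) : ℂ) * U j ^ m - v j‖ + ‖v j‖ := by
        have := norm_add_le (((e j : ℝ) : ℂ) * U j ^ m - v j) (v j)
        simpa using this
      rw [norm_mul, Complex.norm_real, Real.norm_eq_abs, abs_of_nonneg (he0 j), norm_pow] at e2
      have e0 := he0 j
      calc e j * ‖f (U j) - c * U j ^ m‖ ≤ e j * (A * ‖U j‖ ^ (m+1)) := by gcongr; exact hf _ hx1
        _ = A * ‖U j‖ * (e j * ‖U j‖ ^ m) := by ring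
        _ ≤ A * η * (e j * ‖U j‖ ^ m) := by gcongr; exact hU j
        _ ≤ _ := by gcongr
    · have hx1 := hx1 j
      rw [hx] at hx1
      rw [hx, hU0, zero_pow (by omega), mul_zero, zero_sub, norm_neg]
      have e1 : ((e j : ℝ) : ℂ) * f (Y j) - v0 j = ((e j : ℝ) : ℂ) * f (Y j) +
          (- (c * v j)) + (c * v j - v0 j) := by ring
      rw [e1]
      refine (norm_add₃_le).trans ?_
      rw [norm_neg, norm_mul c, norm_mul, Complex.norm_real, Real.norm_eq_abs, abs_of_nonneg (he0 j)]
      have e3 : ‖Y j‖ ^ (m+1) ≤ ‖Y j‖ := pow_le_of_le_one (norm_nonneg _) hx1 (by omega)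
      have e4 : ‖Y j‖ ^ m ≤ ‖Y j‖ := pow_le_of_le_one (norm_nonneg _) hx1 (by omega)
      have e5 : ‖f (Y j)‖ ≤ (‖c‖ + A) * ‖Y j‖ := by
        have := norm_add_le (f (Y j) - c * Y j ^ m) (c * Y j ^ m)
        rw [sub_add_cancel, norm_mul c, norm_pow] at this
        have h6 := hf _ hx1
        have := mul_le_mul_of_nonneg_left e3 hA
        have := mul_le_mul_of_nonneg_left e4 (norm_nonneg c)
        linarith
      have e6 : e j * ‖f (Y j)‖ ≤ (‖c‖ + A) * (Cn * ‖Y j‖) := by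
        calc e j * ‖f (Y j)‖ ≤ Cn * ((‖c‖ + A) * ‖Y j‖) := mul_le_mul (heC j) e5 (norm_nonneg _) hCn
          _ = _ := by ring
      have e7 : 0 ≤ A * η * (‖v j‖ + ‖v j‖) := by positivity
      linarith
  refine (Finset.sum_le_sum fun j _ => key j).trans ?_
  simp only [Finset.sum_add_distrib, ← Finset.mul_sum]
  gcongr

lemma lp_norm_le (p : ℝ≥0∞) [Fact (1 ≤ p)] (hp : p ≠ ⊤) (z : lpC p) (B : ℝ) (hB : 0 ≤ B)
    (h : ∀ N, ∑ j ∈ range N, ‖z j‖ ≤ B) : ‖z‖ ≤ B := by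
  have hp1 : 1 ≤ p.toReal := by
    have := ENNReal.toReal_mono hp (Fact.out : 1 ≤ p)
    simpa using this
  have hp0 : 0 < p.toReal := by linarith
  refine lp.norm_le_of_forall_sum_le hp0 hB ?_
  intro s
  obtain ⟨N, hN⟩ := s.exists_nat_subset_range
  have hsB : ∑ j ∈ s, ‖z j‖ ≤ B := (Finset.sum_le_sum_of_subset_of_nonneg hN (fun _ _ _ => norm_nonneg _)).trans (h N)
  have hsplit : ∀ y : ℝ, 0 ≤ y → y ^ p.toReal = y * y ^ (p.toReal - 1) := by
    intro y hy
    rcases hy.eq_or_lt with rfl | hy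
    · rw [Real.zero_rpow hp0.ne', zero_mul]
    · rw [← Real.rpow_one_add' hy.le (by linarith)]; congr 1; ring
  calc ∑ i ∈ s, ‖z i‖ ^ p.toReal ≤ ∑ i ∈ s, ‖z i‖ * B ^ (p.toReal - 1) := by
        refine Finset.sum_le_sum fun i hi => ?_
        rw [hsplit _ (norm_nonneg _)]
        have : ‖z i‖ ≤ B := (Finset.single_le_sum (f := fun i => ‖z i‖) (fun _ _ => norm_nonneg _) hi).trans hsB
        have h0 : 0 ≤ p.toReal - 1 := by linarith
        gcongr
    _ ≤ B * B ^ (p.toReal - 1) := by rw [← Finset.sum_mul]; gcongr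
    _ = _ := (hsplit B hB).symm

lemma mem_lp (p : ℝ≥0∞) [Fact (1 ≤ p)] (f : ℕ → ℂ) (B : ℝ)
    (h : ∀ N, ∑ j ∈ range N, ‖f j‖ ≤ B) : Memℓp f p := by
  have h1 : Memℓp f 1 := by
    apply memℓp_gen
    simp only [ENNReal.toReal_one, Real.rpow_one]
    exact summable_of_sum_range_le (fun _ => norm_nonneg _) h
  exact h1.of_exponent_ge Fact.out

def ratC (q : ℚ × ℚ) : ℂ := (q.1 : ℂ) + (q.2 : ℂ) * Complex.I

lemma ratC_near (z : ℂ) (ε : ℝ) (hε : 0 < ε) : ∃ q, ‖z - ratC q‖ ≤ ε := by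
  obtain ⟨a, ha1, ha2⟩ := exists_rat_btwn (show z.re < z.re + ε / 2 by linarith)
  obtain ⟨b, hb1, hb2⟩ := exists_rat_btwn (show z.im < z.im + ε / 2 by linarith)
  refine ⟨(a, b), ?_⟩
  refine (Complex.norm_le_abs_re_add_abs_im _).trans ?_
  have e1 : (z - ratC (a, b)).re = z.re - a := by simp [ratC]
  have e2 : (z - ratC (a, b)).im = z.im - b := by simp [ratC]
  rw [e1, e2]
  have : |z.re - a| ≤ ε / 2 := by rw [abs_le]; constructor <;> linarith
  have : |z.im - b| ≤ ε / 2 := by rw [abs_le]; constructor <;> linarith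
  linarith

lemma ratC_zero : ratC 0 = 0 := by simp [ratC]

lemma approx_target (d L : ℕ) (v0 : Fin d → ℕ → ℂ) (hv0 : ∀ l k, L ≤ k → v0 l k = 0)
    (ε : ℝ) (hε : 0 < ε) :
    ∃ f : Fin d → ℕ →₀ ℚ × ℚ, ∀ l N, ∑ j ∈ range N, ‖ratC (f l j) - v0 l j‖ ≤ ε := by
  classical
  have : ∀ l k, ∃ q, ‖v0 l k - ratC q‖ ≤ ε / (L + 1) := fun l k => ratC_near _ _ (by positivity)
  choose q hq using this
  refine ⟨fun l => Finsupp.onFinset (range L) (fun k => if k < L then q l k else 0) (by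
    intro k hk
    by_contra h
    simp at h hk
    omega), ?_⟩
  intro l N
  have key : ∀ j, ‖ratC (if j < L then q l j else 0) - v0 l j‖ ≤ if j < L then ε / (L+1) else 0 := by
    intro j
    by_cases h : j < L
    · simp only [h, if_true]; rw [norm_sub_rev]; exact hq l j
    · simp only [h, if_false]; rw [ratC_zero, hv0 l j (by omega)]; simp
  calc _ ≤ ∑ j ∈ range N, if j < L then ε / (L+1) else 0 := Finset.sum_le_sum fun j _ => key j
    _ = ∑ j ∈ (range N).filter (fun j => j < L), ε / (L+1) := by rw [Finset.sum_filter]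
    _ ≤ ∑ j ∈ range L, ε / (L+1) := by
        apply Finset.sum_le_sum_of_subset_of_nonneg
        · intro j hj; simpa using (Finset.mem_filter.1 hj).2
        · intros; positivity
    _ = L * (ε / (L+1)) := by simp
    _ ≤ ε := by
      rw [← mul_div_assoc, div_le_iff₀ (by positivity)]
      nlinarith

lemma finsupp_bound {d : ℕ} (f : Fin d → ℕ →₀ ℚ × ℚ) : ∃ L, ∀ l k, L ≤ k → ratC (f l k) = 0 := by
  refine ⟨Finset.univ.sup (fun l => (f l).support.sup id + 1), fun l k hk => ?_⟩
  have h1 := Finset.le_sup (f := fun l => (f l).support.sup id + 1) (Finset.mem_univ l)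
  have : f l k = 0 := by
    by_contra h
    have := Finset.le_sup (f := id) (Finsupp.mem_support_iff.2 h)
    simp only [id] at this h1
    omega
  rw [this, ratC_zero]

/-- Logarithm of the product of the first `n` weights. -/
def logS (w : ℝ → ℕ → ℝ) (a : ℝ) (n : ℕ) : ℝ := ∑ i ∈ Finset.Icc 1 n, Real.log (w a i)

lemma logS_succ (w : ℝ → ℕ → ℝ) (a : ℝ) (n : ℕ) : logS w a (n+1) = logS w a n + Real.log (w a (n+1)) := by
  unfold logS
  rw [Finset.sum_Icc_succ_top (by omega)]

lemma pow_apply_coord (p : ℝ≥0∞) [Fact (1 ≤ p)] (d : ℕ) (w : ℝ → ℕ → ℝ)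
    (T : (Fin d → lpC p) →L[ℂ] (Fin d → lpC p)) (lam : Fin d → ℝ)
    (hw : ∀ l n, 1 ≤ n → 0 < w (lam l) n)
    (hT : IsProductShift p d w T lam) (n : ℕ) : ∀ (y : Fin d → lpC p) (l : Fin d) (j : ℕ),
    ((T ^ n) y) l j = ((Real.exp (logS w (lam l) (n + j) - logS w (lam l) j) : ℝ) : ℂ) * y l (n + j) := by
  induction n with
  | zero => intro y l j; simp
  | succ n ih =>
    intro y l j
    rw [pow_succ, mul_apply_eq_comp, ih, hT, ← mul_assoc]
    have e1 : n + 1 + j = n + j + 1 := by ring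
    rw [e1, logS_succ, ← Complex.ofReal_mul]
    congr 2
    have e2 := Real.exp_log (hw l (n+j+1) (by omega))
    have e3 : logS w (lam l) (n + j) + Real.log (w (lam l) (n + j + 1)) - logS w (lam l) j =
      (logS w (lam l) (n + j) - logS w (lam l) j) + Real.log (w (lam l) (n + j + 1)) := by ring
    rw [e3, Real.exp_add, e2]

lemma coef_le (w : ℝ → ℕ → ℝ) (a C : ℝ) (hw : ∀ n, 1 ≤ n → 0 < w a n) (hC : ∀ n, 1 ≤ n → w a n ≤ C)
    (n j : ℕ) : Real.exp (logS w a (n + j) - logS w a j) ≤ C ^ n := by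
  induction n with
  | zero => simp
  | succ n ih =>
    have e1 : n + 1 + j = n + j + 1 := by ring
    have e2 := Real.exp_log (hw (n+j+1) (by omega))
    have e3 : logS w a (n + j) + Real.log (w a (n + j + 1)) - logS w a j =
      (logS w a (n + j) - logS w a j) + Real.log (w a (n + j + 1)) := by ring
    rw [e1, logS_succ, e3, Real.exp_add, e2, pow_succ]
    exact mul_le_mul ih (hC _ (by omega)) (hw _ (by omega)).le ((Real.exp_pos _).le.trans ih)

lemma trunc (p : ℝ≥0∞) [Fact (1 ≤ p)] (hp : p ≠ ⊤) (d : ℕ) (z : Fin d → lpC p) (ε : ℝ) (hε : 0 < ε) :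
    ∃ (L : ℕ) (z' : Fin d → lpC p), (∀ l, ‖z' l - z l‖ < ε) ∧ ∀ l k, L ≤ k → z' l k = 0 := by
  classical
  have h : ∀ l, Filter.Tendsto (fun N => ∑ i ∈ range N, lp.single p i (z l i)) Filter.atTop (nhds (z l)) :=
    fun l => (lp.hasSum_single hp (z l)).tendsto_sum_nat
  have h2 : ∀ᶠ N in Filter.atTop, ∀ l, ‖∑ i ∈ range N, lp.single p i (z l i) - z l‖ < ε := by
    rw [Filter.eventually_all]
    intro l
    have := (Metric.tendsto_nhds.1 (h l)) ε hε
    simpa [dist_eq_norm] using this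
  obtain ⟨L, hL⟩ := h2.exists
  refine ⟨L, fun l => ∑ i ∈ range L, lp.single p i (z l i), hL, ?_⟩
  intro l k hk
  rw [lp.coeFn_sum, Finset.sum_apply]
  apply Finset.sum_eq_zero
  intro i hi
  rw [Finset.mem_range] at hi
  exact lp.single_apply_ne p i _ (by omega)

/-- Corollary 1.1 of the paper (case `X = ℓᵖ(ℕ)`). -/
theorem stmt_0 (d : ℕ) (hd : 1 ≤ d) (p : ℝ≥0∞) [Fact (1 ≤ p)] (hp : p ≠ ⊤)
    (α : ℝ) (hα0 : 0 < α) (hα1 : α < 1 / (d : ℝ))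
    (I : Set ℝ) (hIpos : ∀ a ∈ I, 0 < a) (hIσ : IsSigmaCompact I)
    (w : ℝ → ℕ → ℝ)
    (hwpos : ∀ a ∈ I, ∀ n : ℕ, 1 ≤ n → 0 < w a n)
    (hwbdd : ∀ a ∈ I, ∃ C : ℝ, ∀ n : ℕ, 1 ≤ n → w a n ≤ C)
    (hwcont : ∀ n : ℕ, ContinuousOn (fun a => w a n) I)
    (hcrit : ∀ I₀ ⊆ I, IsCompact I₀ →
      ∃ D₁ > (0 : ℝ), ∃ D₂ > (0 : ℝ), ∃ D₃ > (0 : ℝ), ∃ N : ℕ, ∀ n : ℕ, N ≤ n →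
        (∀ a ∈ I₀, ∀ b ∈ I₀,
          |(∑ i ∈ Finset.Icc 1 n, Real.log (w a i)) -
              ∑ i ∈ Finset.Icc 1 n, Real.log (w b i)| ≤ D₁ * (n : ℝ) ^ α * |a - b|) ∧
        (∀ a ∈ I₀, D₂ * Real.exp (D₃ * (n : ℝ) ^ α) ≤ ∏ i ∈ Finset.Icc 1 n, w a i))
    (T : (Fin d → ℝ) → ((Fin d → lpC p) →L[ℂ] (Fin d → lpC p)))
    (hT : ∀ lam : Fin d → ℝ, (∀ i, lam i ∈ I) → IsProductShift p d w (T lam) lam) :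
    CommonHypercyclicAlgebraCW p d {lam | ∀ i, lam i ∈ I} T := by

  classical
  rcases Set.eq_empty_or_nonempty I with hI | hI
  · -- no parameters: any nontrivial subalgebra works
    refine ⟨{y | ∀ l q, q ≠ 0 → y l q = 0}, ?_, ?_, ?_, ?_, ?_, ?_⟩
    · intro l q _; simp
    · intro x hx y hy l q hq
      simp [hx l q hq, hy l q hq]
    · intro c x hx l q hq
      simp [hx l q hq]
    · intro x hx y hy
      refine ⟨fun l => lp.single p 0 (x l 0 * y l 0), ?_, ?_⟩
      · intro l q hq
        exact lp.single_apply_ne p 0 _ hq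
      · intro l q
        by_cases hq : q = 0
        · subst hq; exact lp.single_apply_self p 0 _
        · rw [hx l q hq, zero_mul]; exact lp.single_apply_ne p 0 _ hq
    · refine ⟨fun l => lp.single p 0 1, ?_, ?_⟩
      · intro l q hq
        exact lp.single_apply_ne p 0 _ hq
      · intro h
        have h1 := congrFun h ⟨0, hd⟩
        have h2 : (lp.single p 0 (1:ℂ) : lpC p) 0 = 1 := lp.single_apply_self p 0 _
        have h3 : (lp.single p 0 (1:ℂ) : lpC p) = 0 := h1
        rw [h3] at h2
        simp at h2
    · intro x _ _ lam hlam
      have := hlam ⟨0, hd⟩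
      rw [hI] at this
      exact absurd this (Set.notMem_empty _)
  obtain ⟨b, hb1, hb⟩ := exists_b d hd α hα1
  obtain ⟨K0, hK0c, hK0U⟩ := hIσ
  let K : ℕ → Set ℝ := fun n => Set.accumulate K0 n
  have hKc : ∀ n, IsCompact (K n) := fun n => isCompact_accumulate hK0c n
  have hKI : ∀ n, K n ⊆ I := by
    intro n
    rw [← hK0U, ← Set.iUnion_accumulate]
    exact Set.subset_iUnion (fun n => Set.accumulate K0 n) n
  have hKmono : Monotone K := Set.monotone_accumulate
  have hKex : ∀ lam : Fin d → ℝ, (∀ l, lam l ∈ I) → ∃ n, ∀ l, lam l ∈ K n := by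
    intro lam hlam
    have : ∀ l, ∃ n, lam l ∈ K n := by
      intro l
      have := hlam l
      rw [← hK0U, ← Set.iUnion_accumulate] at this
      exact Set.mem_iUnion.1 this
    choose n hn using this
    exact ⟨Finset.univ.sup n, fun l => hKmono (Finset.le_sup (Finset.mem_univ l)) (hn l)⟩
  -- radii
  have hrad : ∀ (n m k : ℕ) (f : Fin d → ℕ →₀ ℚ × ℚ),
      ∃ r > (0:ℝ), ∀ (c : Fin d → ℝ) (N0 : ℕ) (δ : ℝ), 0 < δ →
      ∃ (N1 : ℕ) (u : Fin d → ℕ → ℂ), N0 ≤ N1 ∧ (∀ l q, u l q ≠ 0 → N0 ≤ q ∧ q < N1) ∧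
        (∀ l, ∑ q ∈ range N1, ‖u l q‖ ≤ δ) ∧
        ∀ lam : Fin d → ℝ, (∀ l, lam l ∈ K n ∧ c l ≤ lam l ∧ lam l ≤ c l + r) →
          ∃ n, N0 ≤ n ∧ n < N1 ∧ ∀ l N, ∑ j ∈ range N,
            ‖((Real.exp (logS w (lam l) (n + j) - logS w (lam l) j) : ℝ) : ℂ) * u l (n + j) ^ (m+1)
              - ratC (f l j)‖ ≤ 1 / ((k:ℝ) + 1) := by
    intro n m k f
    obtain ⟨D₁, hD₁, D₂, hD₂, D₃, hD₃, Ns, hNs⟩ := hcrit (K n) (hKI n) (hKc n)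
    obtain ⟨L, hL⟩ := finsupp_bound f
    refine block d α hα0 b hb1 hb (K n) (hKc n) (logS w) ?_ D₁ D₃ (-Real.log D₂) hD₁ hD₃ Ns ?_ ?_
      (m+1) (by omega) (fun l j => ratC (f l j)) L hL _ (by positivity)
    · intro i
      unfold logS
      apply continuousOn_finset_sum
      intro q hq
      apply ContinuousOn.log ((hwcont q).mono (hKI n))
      intro a ha
      exact (hwpos a (hKI n ha) q (Finset.mem_Icc.1 hq).1).ne'
    · intro i hi; exact (hNs i hi).1
    · intro i hi a ha
      have h1 := (hNs i hi).2 a ha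
      have h2 := Real.log_le_log (by positivity) h1
      rw [Real.log_mul hD₂.ne' (Real.exp_pos _).ne', Real.log_exp, Real.log_prod (fun q hq =>
        (hwpos a (hKI n ha) q (Finset.mem_Icc.1 hq).1).ne')] at h2
      unfold logS
      linarith
  choose r hr hrblock using hrad
  obtain ⟨X, hX1, hX⟩ := assemble d (ℕ × ℕ × ℕ × (Fin d → ℕ →₀ ℚ × ℚ) × (Fin d → ℤ)) (logS w)
    (fun t => {lam | ∀ l, lam l ∈ K t.1 ∧ (t.2.2.2.2 l : ℝ) * r t.1 t.2.1 t.2.2.1 t.2.2.2.1 ≤ lam l ∧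
      lam l ≤ (t.2.2.2.2 l : ℝ) * r t.1 t.2.1 t.2.2.1 t.2.2.2.1 + r t.1 t.2.1 t.2.2.1 t.2.2.2.1})
    (fun t => t.2.1 + 1) (fun t l j => ratC (t.2.2.2.1 l j)) (fun t => 1 / ((t.2.2.1 : ℝ) + 1))
    (by
      rintro ⟨n, m, k, f, c⟩ N0 δ hδ
      exact hrblock n m k f (fun l => (c l : ℝ) * r n m k f) N0 δ hδ)
  have hXle : ∀ l q, ‖X l q‖ ≤ 1 := by
    intro l q
    exact (Finset.single_le_sum (f := fun q => ‖X l q‖) (fun _ _ => norm_nonneg _)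
      (Finset.self_mem_range_succ q)).trans (hX1 l (q+1))
  -- the elements of the algebra
  have hmem : ∀ P : Polynomial ℂ, P.coeff 0 = 0 → ∃ y : Fin d → lpC p, ∀ l q, y l q = P.eval (X l q) := by
    intro P hP
    obtain ⟨A, hA, hAP⟩ := poly_lin P hP
    have : ∀ l, Memℓp (fun q => P.eval (X l q)) p := by
      intro l
      apply mem_lp p _ (A * 1)
      intro N
      calc ∑ j ∈ range N, ‖P.eval (X l j)‖ ≤ ∑ j ∈ range N, A * ‖X l j‖ :=
            Finset.sum_le_sum fun j _ => hAP _ (hXle l j)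
        _ ≤ A * 1 := by rw [← Finset.mul_sum]; gcongr; exact hX1 l N
    exact ⟨fun l => ⟨_, this l⟩, fun l q => rfl⟩
  -- hypercyclicity
  have hhyp : ∀ P : Polynomial ℂ, P.coeff 0 = 0 → P ≠ 0 → ∀ y : Fin d → lpC p,
      (∀ l q, y l q = P.eval (X l q)) → ∀ lam : Fin d → ℝ, (∀ l, lam l ∈ I) →
      Dense (Set.range fun n : ℕ => ((T lam) ^ (n + 1)) y) := by
    intro P hP0 hP y hy lam hlam
    rw [Metric.dense_iff]
    intro z ρ hρ
    obtain ⟨L, z', hz', hzL⟩ := trunc p hp d z (ρ / 2) (by positivity)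
    obtain ⟨m, hm, c, hc, A, hA, hPA⟩ := poly_low P hP hP0
    set ε : ℝ := ρ / 12 with hε
    have hε0 : 0 < ε := by positivity
    have hc0 : 0 < ‖c‖ := norm_pos_iff.2 hc
    obtain ⟨f, hf⟩ := approx_target d L (fun l k => c⁻¹ * z' l k)
      (fun l k hk => by simp only [hzL l k hk, mul_zero]) (ε / ‖c‖) (by positivity)
    obtain ⟨k, hk⟩ : ∃ k : ℕ, ‖c‖ * (1 / ((k:ℝ) + 1)) ≤ ε := by
      obtain ⟨k, hk⟩ := exists_nat_one_div_lt (show 0 < ε / ‖c‖ by positivity)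
      refine ⟨k, ?_⟩
      rw [lt_div_iff₀ hc0] at hk
      linarith
    obtain ⟨n₀, hn₀⟩ := hKex lam hlam
    set R := r n₀ (m - 1) k f with hR
    have hR0 : 0 < R := hr _ _ _ _
    obtain ⟨Lf, hLf⟩ := finsupp_bound f
    obtain ⟨V, hV0, hV⟩ : ∃ V : ℝ, 0 ≤ V ∧ ∀ l N, ∑ j ∈ range N, ‖ratC (f l j)‖ ≤ V := by
      refine ⟨∑ l, ∑ j ∈ range Lf, ‖ratC (f l j)‖, by positivity, fun l N => ?_⟩
      refine le_trans ?_ (Finset.single_le_sum (f := fun l => ∑ j ∈ range Lf, ‖ratC (f l j)‖)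
          (fun i _ => by positivity) (Finset.mem_univ l))
      have h1 : ∑ j ∈ range N, ‖ratC (f l j)‖ ≤ ∑ j ∈ range (max N Lf), ‖ratC (f l j)‖ :=
        Finset.sum_le_sum_of_subset_of_nonneg (Finset.range_mono (le_max_left _ _)) (fun _ _ _ => norm_nonneg _)
      refine h1.trans (le_of_eq ?_)
      symm
      apply Finset.sum_subset (Finset.range_mono (le_max_right _ _))
      intro j _ hj
      rw [hLf l j (by simpa using hj), norm_zero]
    have hbd : ∃ C : ℝ, 1 ≤ C ∧ ∀ l n, 1 ≤ n → w (lam l) n ≤ C := by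
      choose C hC using fun l => hwbdd (lam l) (hlam l)
      refine ⟨1 + ∑ l, |C l|, by have : 0 ≤ ∑ l, |C l| := by positivity
                                 linarith, fun l n hn => ?_⟩
      have h1 := Finset.single_le_sum (f := fun l => |C l|) (fun _ _ => abs_nonneg _) (Finset.mem_univ l)
      have h2 := hC l n hn
      have h3 := le_abs_self (C l)
      linarith
    obtain ⟨C, hC1, hC⟩ := hbd
    set Z : ℝ := A * (1 / ((k:ℝ) + 1) + V) + (‖c‖ + A) with hZ
    have hZ0 : 0 < Z := by positivity
    obtain ⟨n, hn1, U, Y, hsplit, hU, hsum, hY⟩ := hX (n₀, m - 1, k, f, fun l => ⌊lam l / R⌋) (ε / Z)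
      (by positivity) C hC1 lam (by
        intro l
        refine ⟨hn₀ l, ?_, ?_⟩
        · exact (le_div_iff₀ hR0).1 (Int.floor_le (lam l / R))
        · have := (Int.lt_floor_add_one (lam l / R)).le
          rw [div_le_iff₀ hR0] at this
          simp only
          linarith)
    refine ⟨((T lam) ^ n) y, ?_, ⟨n - 1, by simp only [Nat.sub_add_cancel hn1]⟩⟩
    have hm1 : m - 1 + 1 = m := by omega
    have hest : ∀ l, ‖((T lam) ^ n) y l - z' l‖ ≤ 3 * ε := by
      intro l
      apply lp_norm_le p hp _ _ (by positivity)
      intro N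
      have hcoord : ∀ j, (((T lam) ^ n) y l - z' l) j =
          ((Real.exp (logS w (lam l) (n + j) - logS w (lam l) j) : ℝ) : ℂ) * P.eval (X l (n+j)) - z' l j := by
        intro j
        rw [lp.coeFn_sub, Pi.sub_apply, pow_apply_coord p d w (T lam) lam
          (fun l n hn => hwpos _ (hlam l) n hn) (hT lam hlam) n y l j, hy]
      simp only [hcoord]
      have h5 := estimate (fun j => Real.exp (logS w (lam l) (n + j) - logS w (lam l) j))
        (fun j => (Real.exp_pos _).le) (C ^ n)
        (fun j => coef_le w (lam l) C (fun n hn => hwpos _ (hlam l) n hn) (hC l) n j)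
        (fun j => X l (n+j)) (U l) (Y l) (fun j => ratC (f l j)) (fun j => z' l j) m hm
        (fun z => P.eval z) c A hA hPA (ε / Z) (1 / ((k:ℝ) + 1)) V ε (by positivity)
        (fun j => hXle l _) (hsplit l) (hU l) N
        (by have := hsum l N
            simp only [hm1] at this
            exact this)
        (hY l N) (hV l N) (by
          have h6 := hf l N
          have h7 : ∀ j, ‖c * ratC (f l j) - z' l j‖ = ‖c‖ * ‖ratC (f l j) - c⁻¹ * z' l j‖ := by
            intro j
            rw [← norm_mul, mul_sub, mul_inv_cancel_left₀ hc]
          simp only [h7, ← Finset.mul_sum]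
          rw [le_div_iff₀ hc0] at h6
          linarith)
      refine h5.trans ?_
      have h8 : A * (ε / Z) * (1 / ((k:ℝ) + 1) + V) + (‖c‖ + A) * (ε / Z) = ε := by
        have : A * (ε / Z) * (1 / ((k:ℝ) + 1) + V) + (‖c‖ + A) * (ε / Z) = ε / Z * Z := by
          rw [hZ]; ring
        rw [this, div_mul_cancel₀ _ hZ0.ne']
      linarith
    rw [Metric.mem_ball, dist_pi_lt_iff hρ]
    intro l
    rw [dist_eq_norm]
    have h9 : ((T lam) ^ n) y l - z l = (((T lam) ^ n) y l - z' l) + (z' l - z l) := by abel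
    rw [h9]
    refine (norm_add_le _ _).trans_lt ?_
    have := hest l
    have := hz' l
    linarith
  refine ⟨{y | ∃ P : Polynomial ℂ, P.coeff 0 = 0 ∧ ∀ l q, y l q = P.eval (X l q)}, ?_, ?_, ?_, ?_, ?_, ?_⟩
  · exact ⟨0, by simp, fun l q => by simp⟩
  · rintro x ⟨P, hP, hx⟩ y ⟨Q, hQ, hy⟩
    exact ⟨P + Q, by simp [hP, hQ], fun l q => by simp [hx, hy]⟩
  · rintro c x ⟨P, hP, hx⟩
    exact ⟨Polynomial.C c * P, by simp [hP], fun l q => by simp [hx]⟩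
  · rintro x ⟨P, hP, hx⟩ y ⟨Q, hQ, hy⟩
    have h0 : (P * Q).coeff 0 = 0 := by simp [Polynomial.mul_coeff_zero, hP]
    obtain ⟨z, hz⟩ := hmem (P * Q) h0
    exact ⟨z, ⟨P * Q, h0, hz⟩, fun l q => by rw [hz, hx, hy, Polynomial.eval_mul]⟩
  · obtain ⟨y, hy⟩ := hmem Polynomial.X (by simp)
    refine ⟨y, ⟨Polynomial.X, by simp, hy⟩, ?_⟩
    rintro rfl
    obtain ⟨a, ha⟩ := hI
    have hden := hhyp Polynomial.X (by simp) Polynomial.X_ne_zero 0 hy (fun _ => a) (fun _ => ha)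
    have hr0 : (Set.range fun n : ℕ => ((T fun _ => a) ^ (n + 1)) (0 : Fin d → lpC p)) ⊆ {0} := by
      rintro _ ⟨n, rfl⟩
      simp
    have h1 := hden.mono hr0
    have h2 : (fun _ => lp.single p 0 1 : Fin d → lpC p) ∈ closure ({0} : Set (Fin d → lpC p)) := h1 _
    rw [closure_singleton, Set.mem_singleton_iff] at h2
    have h3 : (lp.single p 0 (1:ℂ) : lpC p) = 0 := congrFun h2 ⟨0, hd⟩
    have h4 : (lp.single p 0 (1:ℂ) : lpC p) 0 = 1 := lp.single_apply_self p 0 _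
    rw [h3] at h4
    simp at h4
  · rintro x ⟨P, hP, hx⟩ hne lam hlam
    refine hhyp P hP ?_ x hx lam hlam
    rintro rfl
    apply hne
    ext l q
    simp [hx]
end
end

section
/- Let d ≥ 1 be an integer, α ∈ (0, 1/d), and let I ⊂ (0,∞) be σ-compact. Let (w(λ))_{λ∈I} be a continuous family of bounded positive weight sequences. Assume that for every compact I₀ ⊂ I there exist D₁, D₂, D₃ > 0 and an integer N ≥ 0 such that for all n ≥ N: (1) the map a ↦ Σ_{i=1}^n log(w_i(a)) is D₁·n^α-Lipschitz on I₀; and (2) inf_{a∈I₀} w_1(a)⋯w_n(a) ≥ D₂·exp(D₃·n^α). Then the family (B_{w(λ₁)} × ⋯ × B_{w(λ_d)})_{λ∈I^d} admits a common hypercyclic algebra on c₀(ℕ)^d for the coordinatewise product. -/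
open scoped ENNReal ZeroAtInfty
open Finset

noncomputable section

/-- The space `c₀(ℕ)` of complex sequences vanishing at infinity, with the sup norm. -/
abbrev c0C : Type := C₀(ℕ, ℂ)

/-- `T` is the product operator `B_{w(lam 0)} × ⋯ × B_{w(lam (d-1))}` of weighted backward
shifts, the weight sequence of the `i`-th factor being `(w (lam i) n)_{n ≥ 1}`. -/
def IsProductShiftC0 (d : ℕ) (w : ℝ → ℕ → ℝ)
    (T : (Fin d → c0C) →L[ℂ] (Fin d → c0C)) (lam : Fin d → ℝ) : Prop :=
  ∀ (v : Fin d → c0C) (i : Fin d) (n : ℕ),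
    (T v) i n = (w (lam i) (n + 1) : ℂ) * v i (n + 1)

/-- The family `T lam`, `lam ∈ S`, admits a common hypercyclic algebra for the coordinatewise
product: there is a non-unital subalgebra `A ≠ {0}` of `(c₀(ℕ))^d` (closed under addition,
scalar multiplication and the componentwise coordinatewise product) every nonzero element of
which is a common hypercyclic vector for the family. -/
def CommonHypercyclicAlgebraCWC0 (d : ℕ) (S : Set (Fin d → ℝ))
    (T : (Fin d → ℝ) → ((Fin d → c0C) →L[ℂ] (Fin d → c0C))) : Prop :=
  ∃ A : Set (Fin d → c0C),
    (0 : Fin d → c0C) ∈ A ∧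
    (∀ x ∈ A, ∀ y ∈ A, x + y ∈ A) ∧
    (∀ (c : ℂ), ∀ x ∈ A, c • x ∈ A) ∧
    (∀ x ∈ A, ∀ y ∈ A, ∃ z ∈ A, ∀ (i : Fin d) (n : ℕ), z i n = x i n * y i n) ∧
    (∃ x ∈ A, x ≠ 0) ∧
    (∀ x ∈ A, x ≠ 0 → ∀ lam ∈ S, Dense (Set.range fun n : ℕ => ((T lam) ^ (n + 1)) x))

lemma cell_exists (σ x : ℝ) (hx : 0 ≤ x) : ∀ b : ℕ, 1 ≤ b → x ≤ b * σ →
    ∃ c : ℕ, c < b ∧ c * σ ≤ x ∧ x ≤ (c + 1) * σ := by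
  intro b hb
  induction b, hb using Nat.le_induction with
  | base => intro h; exact ⟨0, by norm_num, by simpa using hx, by simpa using h⟩
  | succ b hb ih =>
    intro h
    by_cases h' : x ≤ b * σ
    · obtain ⟨c, hc, h1, h2⟩ := ih h'
      exact ⟨c, by omega, h1, h2⟩
    · exact ⟨b, by omega, by linarith, by push_cast at h; exact h⟩

lemma digit_enum (d b : ℕ) (hb : 1 ≤ b) :
    ∃ e : ℕ → (Fin d → Fin b), ∀ f : Fin d → Fin b, ∃ k < b ^ d, e k = f := by
  refine ⟨fun k => if h : k < b ^ d then finFunctionFinEquiv.symm ⟨k, h⟩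
    else fun _ => ⟨0, hb⟩, fun f => ⟨finFunctionFinEquiv f, (finFunctionFinEquiv f).2, ?_⟩⟩
  simp only [(finFunctionFinEquiv f).2, dite_true, Fin.eta, Equiv.symm_apply_apply]

lemma comb (d b : ℕ) (hb : 1 ≤ b) (α : ℝ) (hα : 0 < α)
    (hβ : ((2 * b ^ d : ℕ) : ℝ) ^ α ≤ b) (H : ℕ) :
    ∀ (u : Fin d → ℝ) (ρ : ℝ) (_ : 0 ≤ ρ) (S : Set (Fin d → ℝ))
      (_ : ∀ l ∈ S, ∀ i, u i ≤ l i ∧ l i ≤ u i + ρ),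
    ∃ (N : Finset ℕ) (μ : ℕ → Fin d → ℝ),
      (∀ t ∈ N, t < (2 * b ^ d) ^ H ∧ μ t ∈ S) ∧
      (∀ l ∈ S, ∃ t ∈ N, ∀ i, |l i - μ t i| ≤ ρ / (b : ℝ) ^ H) ∧
      ∀ t ∈ N, ∀ t' ∈ N, t < t' → ∀ i, |μ t i - μ t' i| ≤
        ρ * b * (((t' : ℝ) - t) / (((2 * b ^ d) ^ H : ℕ) : ℝ)) ^ α := by
  have hb0 : (0 : ℝ) < b := by exact_mod_cast hb
  induction H with
  | zero =>
    intro u ρ hρ S hS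
    by_cases hne : S.Nonempty
    · obtain ⟨l0, hl0⟩ := hne
      refine ⟨{0}, fun _ => l0, by simpa using hl0, ?_, ?_⟩
      · intro l hl
        refine ⟨0, by simp, fun i => ?_⟩
        have h1 := hS l hl i
        have h2 := hS l0 hl0 i
        rw [abs_le]; constructor <;> simp <;> linarith
      · intro t ht t' ht' h
        simp at ht ht'; omega
    · rw [Set.not_nonempty_iff_eq_empty] at hne
      subst hne
      exact ⟨∅, fun _ => u, by simp, by simp, by simp⟩
  | succ H ih =>
    intro u ρ hρ S hS
    obtain ⟨e, he⟩ := digit_enum d b hb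
    have ih' := fun k : ℕ => ih (fun i => u i + (e k i : ℕ) * (ρ / b)) (ρ / b) (by positivity)
      {l | l ∈ S ∧ ∀ i, u i + (e k i : ℕ) * (ρ / b) ≤ l i ∧
        l i ≤ u i + (e k i : ℕ) * (ρ / b) + ρ / b} (fun l hl i => hl.2 i)
    choose N μ h1 h2 h3 using ih'
    set M := (2 * b ^ d) ^ H with hM
    have hM0 : 0 < M := by positivity
    have hβ0 : 0 < 2 * b ^ d := by positivity
    refine ⟨(range (2 * b ^ d * M)).filter fun t => t % (2 * M) ∈ N (t / (2 * M)),
      fun t => μ (t / (2 * M)) (t % (2 * M)), ?_, ?_, ?_⟩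
    · intro t ht
      simp only [mem_filter, Finset.mem_range] at ht
      refine ⟨by rw [pow_succ, mul_comm]; exact ht.1, (h1 _ _ ht.2).2.1⟩
    · intro l hl
      have hc : ∀ i, ∃ c : ℕ, c < b ∧ c * (ρ / b) ≤ l i - u i ∧ l i - u i ≤ (c + 1) * (ρ / b) := by
        intro i
        apply cell_exists _ _ (by linarith [(hS l hl i).1]) b hb
        rw [mul_div_cancel₀ _ hb0.ne']
        linarith [(hS l hl i).2]
      choose c hcb hc1 hc2 using hc
      obtain ⟨k, hk, hek⟩ := he (fun i => ⟨c i, hcb i⟩)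
      obtain ⟨t, ht, htl⟩ := h2 k l ⟨hl, fun i => by
        rw [hek]; constructor <;> simp only <;> linarith [hc1 i, hc2 i]⟩
      have htM := (h1 k t ht).1
      have e1 : (k * (2 * M) + t) % (2 * M) = t := by
        rw [mul_comm k, Nat.mul_add_mod, Nat.mod_eq_of_lt (by omega)]
      have e2 : (k * (2 * M) + t) / (2 * M) = k := by
        rw [Nat.div_eq_of_lt_le] <;> nlinarith
      refine ⟨k * (2 * M) + t, ?_, ?_⟩
      · simp only [mem_filter, Finset.mem_range, e1, e2]
        refine ⟨?_, ht⟩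
        have : (k + 1) * (2 * M) ≤ b ^ d * (2 * M) := Nat.mul_le_mul_right _ hk
        nlinarith
      · intro i
        simp only [e1, e2]
        refine (htl i).trans (le_of_eq ?_)
        rw [pow_succ]; field_simp
    · intro t ht t' ht' htt i
      simp only [mem_filter, Finset.mem_range] at ht ht'
      have hbα : ∀ x : ℝ, 0 ≤ x → x ≤ (2 * b ^ d : ℕ) → x ^ α ≤ b := fun x hx hx' =>
        (Real.rpow_le_rpow hx hx' hα.le).trans hβ
      have hMr : (0 : ℝ) < M := by exact_mod_cast hM0
      have hβr : (0 : ℝ) < ((2 * b ^ d : ℕ) : ℝ) := by exact_mod_cast hβ0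
      have htt0 : (0 : ℝ) < (t' : ℝ) - t := by
        have : (t : ℝ) < t' := by exact_mod_cast htt
        linarith
      have key : ((t' : ℝ) - t) / (((2 * b ^ d) ^ (H + 1) : ℕ) : ℝ)
          = (((t' : ℝ) - t) / M) / ((2 * b ^ d : ℕ) : ℝ) := by
        rw [pow_succ, ← hM]; push_cast; field_simp
      rw [key, Real.div_rpow (by positivity) hβr.le]
      have hβα : 0 < ((2 * b ^ d : ℕ) : ℝ) ^ α := by positivity
      have hmt := Nat.div_add_mod t (2 * M)
      have hmt' := Nat.div_add_mod t' (2 * M)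
      by_cases hk : t / (2 * M) = t' / (2 * M)
      · have hlt : t % (2 * M) < t' % (2 * M) := by
          rw [hk] at hmt; omega
        have h := h3 (t' / (2 * M)) (t % (2 * M)) (hk ▸ ht.2) (t' % (2 * M)) ht'.2 hlt i
        have e3 : ((t' % (2 * M) : ℕ) : ℝ) - ((t % (2 * M) : ℕ) : ℝ) = (t' : ℝ) - t := by
          have h1 : (t : ℝ) = (2 * M * (t / (2 * M)) + t % (2 * M) : ℕ) := by rw [hmt]
          have h2 : (t' : ℝ) = (2 * M * (t' / (2 * M)) + t' % (2 * M) : ℕ) := by rw [hmt']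
          rw [h1, h2, hk]; push_cast; ring
        rw [e3] at h
        simp only
        rw [hk]
        refine h.trans ?_
        rw [div_mul_cancel₀ _ hb0.ne', mul_assoc]
        apply mul_le_mul_of_nonneg_left _ hρ
        rw [mul_div_assoc', le_div_iff₀ hβα, mul_comm]
        exact mul_le_mul_of_nonneg_right hβ (by positivity)
      · have hle : t / (2 * M) < t' / (2 * M) :=
          lt_of_le_of_ne (Nat.div_le_div_right htt.le) hk
        have hr := (h1 _ _ ht.2).1
        have hgap : M ≤ t' - t := by
          have : 2 * M * (t / (2 * M) + 1) ≤ 2 * M * (t' / (2 * M)) := Nat.mul_le_mul_left _ hle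
          have h5 : 2 * M * (t / (2 * M) + 1) = 2 * M * (t / (2 * M)) + 2 * M := by ring
          omega
        have hgap' : (1 : ℝ) ≤ ((t' : ℝ) - t) / M := by
          rw [le_div_iff₀ hMr, one_mul, ← Nat.cast_sub htt.le]; exact_mod_cast hgap
        have hone : (1 : ℝ) ≤ (((t' : ℝ) - t) / M) ^ α := Real.one_le_rpow hgap' hα.le
        have a1 := hS _ (h1 _ _ ht.2).2.1 i
        have a2 := hS _ (h1 _ _ ht'.2).2.1 i
        have : |μ (t / (2 * M)) (t % (2 * M)) i - μ (t' / (2 * M)) (t' % (2 * M)) i| ≤ ρ := by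
          rw [abs_le]; constructor <;> linarith
        refine this.trans ?_
        rw [mul_assoc]
        apply le_mul_of_one_le_right hρ
        rw [mul_div_assoc', le_div_iff₀ hβα, one_mul]
        refine hβ.trans (le_mul_of_one_le_right hb0.le hone)

lemma exists_base (d : ℕ) (hd : 1 ≤ d) (α : ℝ) (hα1 : α < 1 / (d : ℝ)) :
    ∃ b : ℕ, 1 ≤ b ∧ ((2 * b ^ d : ℕ) : ℝ) ^ α < b := by
  have hd0 : (0 : ℝ) < d := by exact_mod_cast hd
  have hpos : 0 < 1 - d * α := by
    rw [lt_div_iff₀ hd0] at hα1; linarith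
  have h := (tendsto_rpow_atTop hpos).comp tendsto_natCast_atTop_atTop
  obtain ⟨b, hb1, hb2⟩ := ((h.eventually_gt_atTop ((2 : ℝ) ^ α)).and
    (Filter.eventually_ge_atTop 1)).exists
  refine ⟨b, hb2, ?_⟩
  have hb0 : (0 : ℝ) < b := by exact_mod_cast hb2
  push_cast
  rw [Real.mul_rpow (by norm_num) (by positivity), ← Real.rpow_natCast, ← Real.rpow_mul hb0.le]
  calc (2 : ℝ) ^ α * (b : ℝ) ^ (d * α) < (b : ℝ) ^ (1 - d * α) * (b : ℝ) ^ (d * α) := by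
        apply mul_lt_mul_of_pos_right hb1; positivity
    _ = b := by rw [← Real.rpow_add hb0]; simp

/-- `w_1 ⋯ w_n`. -/
def Wp (w : ℝ → ℕ → ℝ) (a : ℝ) (n : ℕ) : ℝ := ∏ i ∈ Finset.Icc 1 n, w a i

/-- `w_{j+1} ⋯ w_{j+n}`. -/
def Vp (w : ℝ → ℕ → ℝ) (a : ℝ) (j n : ℕ) : ℝ := ∏ i ∈ Finset.range n, w a (j + i + 1)

lemma Wp_add (w : ℝ → ℕ → ℝ) (a : ℝ) (j n : ℕ) : Wp w a (j + n) = Wp w a j * Vp w a j n := by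
  unfold Wp Vp
  induction n with
  | zero => simp
  | succ n ih =>
    rw [← add_assoc, Finset.prod_Icc_succ_top (by omega), ih, prod_range_succ, mul_assoc]

lemma T_pow (d : ℕ) (w : ℝ → ℕ → ℝ)
    (T : (Fin d → c0C) →L[ℂ] (Fin d → c0C)) (lam : Fin d → ℝ)
    (hT : IsProductShiftC0 d w T lam) (n : ℕ) : ∀ (v : Fin d → c0C) (i : Fin d) (j : ℕ),
    ((T ^ n) v) i j = (Vp w (lam i) j n : ℂ) * v i (j + n) := by
  induction n with
  | zero => intro v i j; simp [Vp]
  | succ n ih =>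
    intro v i j
    rw [pow_succ, mul_apply_eq_comp, ih, hT]
    unfold Vp
    rw [prod_range_succ]
    push_cast
    rw [mul_assoc]; rfl

structure Crit (w : ℝ → ℕ → ℝ) (α : ℝ) (K : Set ℝ) (D₁ D₂ D₃ : ℝ) (N : ℕ) : Prop where
  cpt : IsCompact K
  pos : ∀ a ∈ K, ∀ n : ℕ, 1 ≤ n → 0 < w a n
  bdd : ∀ a ∈ K, ∃ C : ℝ, ∀ n : ℕ, 1 ≤ n → w a n ≤ C
  cont : ∀ n : ℕ, ContinuousOn (fun a => w a n) K
  h1 : 0 < D₁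
  h2 : 0 < D₂
  h3 : 0 < D₃
  lip : ∀ n : ℕ, N ≤ n → ∀ a ∈ K, ∀ b ∈ K,
    |Real.log (Wp w a n) - Real.log (Wp w b n)| ≤ D₁ * (n : ℝ) ^ α * |a - b|
  low : ∀ n : ℕ, N ≤ n → ∀ a ∈ K, D₂ * Real.exp (D₃ * (n : ℝ) ^ α) ≤ Wp w a n

section
variable {w : ℝ → ℕ → ℝ} {α : ℝ} {K : Set ℝ} {D₁ D₂ D₃ : ℝ} {N : ℕ}

lemma Crit.Wpos (h : Crit w α K D₁ D₂ D₃ N) {a : ℝ} (ha : a ∈ K) (n : ℕ) : 0 < Wp w a n :=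
  Finset.prod_pos fun i hi => h.pos a ha i (Finset.mem_Icc.1 hi).1

lemma Crit.Vpos (h : Crit w α K D₁ D₂ D₃ N) {a : ℝ} (ha : a ∈ K) (j n : ℕ) : 0 < Vp w a j n :=
  Finset.prod_pos fun i _ => h.pos a ha _ (by omega)

lemma Crit.Wcont (h : Crit w α K D₁ D₂ D₃ N) (n : ℕ) : ContinuousOn (fun a => Wp w a n) K := by
  unfold Wp
  exact continuousOn_finsetProd _ fun i _ => h.cont i

lemma Crit.logV (h : Crit w α K D₁ D₂ D₃ N) {a : ℝ} (ha : a ∈ K) (j n : ℕ) :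
    Real.log (Vp w a j n) = Real.log (Wp w a (j + n)) - Real.log (Wp w a j) := by
  rw [Wp_add, Real.log_mul (h.Wpos ha j).ne' (h.Vpos ha j n).ne']; ring

lemma Crit.subexp (hα : 0 < α) (h : Crit w α K D₁ D₂ D₃ N) (n : ℕ) (δ : ℝ) (hδ : 0 < δ) :
    ∀ᶠ q : ℕ in Filter.atTop, ∀ a ∈ K, Vp w a (q - n) n ≤ Real.exp (δ * (q : ℝ) ^ α) := by
  have hD := h.h1
  obtain ⟨t, htK, htf, hcov⟩ := h.cpt.finite_cover_balls (e := δ / (4 * D₁)) (by positivity)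
  have hq : Filter.Tendsto (fun q : ℕ => (q : ℝ) ^ α) Filter.atTop Filter.atTop :=
    (tendsto_rpow_atTop hα).comp tendsto_natCast_atTop_atTop
  have hev : ∀ᶠ q : ℕ in Filter.atTop, ∀ a ∈ t,
      Real.log (Vp w a (q - n) n) ≤ δ / 2 * (q : ℝ) ^ α := by
    rw [htf.eventually_all]
    intro a ha
    obtain ⟨C, hC⟩ := h.bdd a (htK ha)
    have hC0 : 0 < C := (h.pos a (htK ha) 1 le_rfl).trans_le (hC 1 le_rfl)
    filter_upwards [(hq.const_mul_atTop (by positivity : 0 < δ / 2)).eventually_ge_atTop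
      (Real.log (C ^ n))] with q hq
    refine le_trans ?_ hq
    apply Real.log_le_log (h.Vpos (htK ha) _ _)
    unfold Vp
    calc _ ≤ ∏ i ∈ range n, C := Finset.prod_le_prod
            (fun i _ => (h.pos a (htK ha) _ (by omega)).le) (fun i _ => hC _ (by omega))
      _ = C ^ n := by simp
  filter_upwards [hev, Filter.eventually_ge_atTop (N + n)] with q hq1 hqN a ha
  obtain ⟨a0, ha0, hda⟩ : ∃ a0 ∈ t, a ∈ Metric.ball a0 (δ / (4 * D₁)) := by
    simpa using hcov ha
  rw [Metric.mem_ball, Real.dist_eq] at hda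
  rw [← Real.log_le_iff_le_exp (h.Vpos ha _ _)]
  have e1 := h.logV ha (q - n) n
  have e2 := h.logV (htK ha0) (q - n) n
  have e3 := hq1 a0 ha0
  rw [Nat.sub_add_cancel (by omega)] at e1 e2
  have l1 := (abs_le.1 (h.lip q (by omega) a ha a0 (htK ha0))).2
  have l2 := (abs_le.1 (h.lip (q - n) (by omega) a ha a0 (htK ha0))).1
  have hmono : ((q - n : ℕ) : ℝ) ^ α ≤ (q : ℝ) ^ α :=
    Real.rpow_le_rpow (by positivity) (by exact_mod_cast Nat.sub_le _ _) hα.le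
  have hmul : D₁ * |a - a0| ≤ δ / 4 := by
    have := mul_le_mul_of_nonneg_left hda.le hD.le
    refine this.trans (le_of_eq ?_); field_simp
  have hq0 : (0 : ℝ) ≤ (q : ℝ) ^ α := by positivity
  have hqn0 : (0 : ℝ) ≤ ((q - n : ℕ) : ℝ) ^ α := by positivity
  have m1 : D₁ * (q : ℝ) ^ α * |a - a0| ≤ δ / 4 * (q : ℝ) ^ α := by nlinarith
  have m2 : D₁ * ((q - n : ℕ) : ℝ) ^ α * |a - a0| ≤ δ / 4 * (q : ℝ) ^ α := by nlinarith
  nlinarith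
lemma Crit.exists_W_bound (h : Crit w α K D₁ D₂ D₃ N) (p : ℕ) :
    ∃ C > 0, ∀ j < p, ∀ a ∈ K, Wp w a j ≤ C := by
  have := fun j => h.cpt.exists_bound_of_continuousOn (h.Wcont j)
  choose C hC using this
  refine ⟨1 + ∑ j ∈ range p, |C j|, by positivity, fun j hj a ha => ?_⟩
  have h1 := Finset.single_le_sum (f := fun j => |C j|) (fun i _ => abs_nonneg _)
    (Finset.mem_range.2 hj)
  have h2 := (le_abs_self _).trans ((hC j a ha).trans (le_abs_self _))
  linarith

lemma exists_y_bound {d : ℕ} (y : Fin d → ℕ → ℂ) (p : ℕ) (hy : ∀ i j, p ≤ j → y i j = 0) :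
    ∃ Y > 0, ∀ i j, ‖y i j‖ ≤ Y := by
  refine ⟨1 + ∑ i, ∑ j ∈ range p, ‖y i j‖, by positivity, fun i j => ?_⟩
  by_cases hj : j < p
  · have h1 := Finset.single_le_sum (f := fun j => ‖y i j‖) (fun i _ => norm_nonneg _)
      (Finset.mem_range.2 hj)
    have h2 := Finset.single_le_sum (f := fun i => ∑ j ∈ range p, ‖y i j‖)
      (fun i _ => Finset.sum_nonneg fun _ _ => norm_nonneg _) (Finset.mem_univ i)
    linarith
  · rw [hy i j (by omega), norm_zero]; positivity

lemma Crit.unif (h : Crit w α K D₁ D₂ D₃ N) (p : ℕ) (η : ℝ) (hη : 0 < η) (f : ℕ → ℝ)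
    (hf : Filter.Tendsto f Filter.atTop (nhds 0)) :
    ∀ᶠ H in Filter.atTop, ∀ j ∈ range p, ∀ a ∈ K, ∀ a' ∈ K, |a - a'| ≤ f H →
      |Real.log (Wp w a j) - Real.log (Wp w a' j)| ≤ η := by
  rw [Filter.eventually_all_finset]
  intro j _
  have hc : ContinuousOn (fun a => Real.log (Wp w a j)) K :=
    (h.Wcont j).log fun a ha => (h.Wpos ha j).ne'
  have huc := h.cpt.uniformContinuousOn_of_continuous hc
  obtain ⟨δ, hδ, hh⟩ := Metric.uniformContinuousOn_iff.1 huc η hη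
  filter_upwards [hf.eventually_lt_const hδ] with H hH a ha a' ha' haa
  exact (hh a ha a' ha' (lt_of_le_of_lt haa hH)).le

set_option maxHeartbeats 1000000 in
lemma Crit.block (hα : 0 < α) (hα1 : α ≤ 1) (h : Crit w α K D₁ D₂ D₃ N) (d b : ℕ)
    (hb : 1 ≤ b) (hβ : ((2 * b ^ d : ℕ) : ℝ) ^ α < b) (u : Fin d → ℝ) (ρ : ℝ) (hρ : 0 < ρ)
    (hρ2 : 4 * D₁ * b * ρ ≤ D₃) (S : Set (Fin d → ℝ))
    (hSK : ∀ l ∈ S, ∀ i, l i ∈ K) (hS : ∀ l ∈ S, ∀ i, u i ≤ l i ∧ l i ≤ u i + ρ)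
    (m : ℕ) (hm : m ≠ 0) (y : Fin d → ℕ → ℂ) (p : ℕ) (hy : ∀ i j, p ≤ j → y i j = 0) :
    ∃ C > 0, ∃ c > 0, ∀ ε > 0, ∀ A₀ : ℕ, ∃ (x : Fin d → ℕ → ℂ) (B : ℕ), A₀ < B ∧
      (∀ i q, x i q ≠ 0 → A₀ ≤ q ∧ q < B) ∧
      (∀ i q, ‖x i q‖ ≤ C * Real.exp (-(c * (q : ℝ) ^ α))) ∧
      ∀ l ∈ S, ∃ n, A₀ ≤ n ∧ n ≤ B ∧ ∀ i j,
        ‖(Vp w (l i) j n : ℂ) * x i (j + n) ^ m - y i j‖ ≤ ε := by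
  obtain ⟨CW, hCW0, hCW⟩ := h.exists_W_bound p
  obtain ⟨Y, hY0, hY⟩ := exists_y_bound y p hy
  have hD1 := h.h1
  have hD2 := h.h2
  have hD3 := h.h3
  have hb0 : (0 : ℝ) < b := by exact_mod_cast hb
  set C₁ := Y * CW / D₂ with hC1
  have hC10 : 0 < C₁ := by positivity
  refine ⟨max 1 C₁, by positivity, D₃ / m, by positivity, fun ε hε A₀ => ?_⟩
  -- choice of the scale
  have hqt : Filter.Tendsto (fun q : ℕ => (q : ℝ) ^ α) Filter.atTop Filter.atTop :=
    (tendsto_rpow_atTop hα).comp tendsto_natCast_atTop_atTop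
  have hexp : Filter.Tendsto (fun s : ℕ => C₁ * Real.exp 1 * Real.exp (-(D₃ / 2 * (s : ℝ) ^ α)))
      Filter.atTop (nhds 0) := by
    rw [← mul_zero (C₁ * Real.exp 1)]
    apply Filter.Tendsto.const_mul
    exact Real.tendsto_exp_neg_atTop_nhds_zero.comp
      (hqt.const_mul_atTop (by positivity : 0 < D₃ / 2))
  obtain ⟨s, hs1, hsm⟩ := ((hexp.eventually_le_const hε).and
    (Filter.eventually_ge_atTop (p + N + A₀ + 1))).exists
  set η := min (1 / 2) (ε / (4 * Y)) with hη
  have hη0 : 0 < η := by positivity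
  have hη1 : η ≤ 1 / 2 := min_le_left _ _
  have hη2 : 4 * η * Y ≤ ε := by
    have : η ≤ ε / (4 * Y) := min_le_right _ _
    rw [le_div_iff₀ (by positivity)] at this; linarith
  have hβpos : 0 < 2 * b ^ d := by positivity
  have hβ1 : (1 : ℝ) ≤ ((2 * b ^ d : ℕ) : ℝ) ^ α :=
    Real.one_le_rpow (by exact_mod_cast hβpos) hα.le
  have hb1 : (1 : ℝ) < b := lt_of_le_of_lt hβ1 hβ
  have t1 : Filter.Tendsto (fun H : ℕ => ρ / (b : ℝ) ^ H) Filter.atTop (nhds 0) :=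
    Filter.Tendsto.const_div_atTop (tendsto_pow_atTop_atTop_of_one_lt hb1) _
  have t2 : Filter.Tendsto (fun H : ℕ => D₁ * (2 * s * (((2 * b ^ d) ^ H : ℕ) : ℝ)) ^ α
      * (ρ / (b : ℝ) ^ H)) Filter.atTop (nhds 0) := by
    have : (fun H : ℕ => D₁ * (2 * s * (((2 * b ^ d) ^ H : ℕ) : ℝ)) ^ α * (ρ / (b : ℝ) ^ H))
        = fun H : ℕ => (D₁ * ρ * (2 * s : ℝ) ^ α) * (((2 * b ^ d : ℕ) : ℝ) ^ α / b) ^ H := by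
      funext H
      rw [Nat.cast_pow, Real.mul_rpow (by positivity) (by positivity), ← Real.rpow_natCast_mul
        (by positivity), mul_comm (H : ℝ) α, Real.rpow_mul_natCast (by positivity), div_pow]
      ring
    rw [this, ← mul_zero (D₁ * ρ * (2 * s : ℝ) ^ α)]
    apply Filter.Tendsto.const_mul
    apply tendsto_pow_atTop_nhds_zero_of_lt_one (by positivity)
    rw [div_lt_one hb0]; exact hβ
  obtain ⟨H, hH1, hH2⟩ := ((h.unif p η hη0 _ t1).and (t2.eventually_le_const hη0)).exists
  obtain ⟨Ns, μ, g1, g2, g3⟩ := comb d b hb α hα hβ.le H u ρ hρ.le S hS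
  set M := (2 * b ^ d) ^ H with hM
  have hM0 : 0 < M := by positivity
  have hMr : (0 : ℝ) < M := by exact_mod_cast hM0
  have hs0 : 0 < s := by omega
  have hsM : s ≤ s * M := Nat.le_mul_of_pos_right _ hM0
  let R : ℂ → ℂ := fun z => z ^ ((m : ℂ)⁻¹)
  have hR : ∀ z, R z ^ m = z := fun z => Complex.cpow_nat_inv_pow z hm
  have hR0 : R 0 = 0 := pow_eq_zero_iff hm |>.1 (hR 0)
  let x : Fin d → ℕ → ℂ := fun i q => if M ≤ q / s ∧ q / s - M ∈ Ns then
    R (y i (q % s) / (Vp w (μ (q / s - M) i) (q % s) (s * (q / s)) : ℂ)) else 0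
  have hx1 : ∀ i q, x i q ≠ 0 → M ≤ q / s ∧ q / s - M ∈ Ns ∧ q % s < p ∧ s * M ≤ q ∧
      q < 2 * s * M := by
    intro i q hq
    by_cases hc : M ≤ q / s ∧ q / s - M ∈ Ns
    · refine ⟨hc.1, hc.2, ?_, ?_, ?_⟩
      · by_contra hp
        apply hq
        simp only [x, if_pos hc]
        rw [hy i _ (by omega), zero_div, hR0]
      · calc s * M ≤ s * (q / s) := Nat.mul_le_mul_left _ hc.1
          _ ≤ q := Nat.mul_div_le q s
      · have := (g1 _ hc.2).1
        have h5 : q / s + 1 ≤ 2 * M := by omega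
        calc q < s * (q / s + 1) := Nat.lt_mul_div_succ q hs0
          _ ≤ s * (2 * M) := Nat.mul_le_mul_left _ h5
          _ = 2 * s * M := by ring
    · exact absurd (by simp only [x, if_neg hc]) hq
  have hx2 : ∀ i q, M ≤ q / s → q / s - M ∈ Ns → x i q ^ m =
      y i (q % s) / (Vp w (μ (q / s - M) i) (q % s) (s * (q / s)) : ℂ) := by
    intro i q a1 a2
    simp only [x, if_pos (And.intro a1 a2), hR]
  -- size of the powers
  have hx3 : ∀ i q, M ≤ q / s → q / s - M ∈ Ns →
      ‖x i q‖ ^ m ≤ Y * CW / Wp w (μ (q / s - M) i) q := by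
    intro i q a1 a2
    have hμ := hSK _ (g1 _ a2).2 i
    rw [← norm_pow, hx2 i q a1 a2, norm_div, Complex.norm_real, Real.norm_of_nonneg
      (h.Vpos hμ _ _).le]
    have e1 := Wp_add w (μ (q / s - M) i) (q % s) (s * (q / s))
    rw [Nat.mod_add_div] at e1
    have hVp := h.Vpos hμ (q % s) (s * (q / s))
    have hWp := h.Wpos hμ (q % s)
    by_cases hp : q % s < p
    · rw [e1, div_le_div_iff₀ hVp (by positivity)]
      have := hCW _ hp _ hμ
      have hy1 := hY i (q % s)
      have : ‖y i (q % s)‖ * Wp w (μ (q / s - M) i) (q % s) ≤ Y * CW := by gcongr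
      nlinarith
    · rw [hy i _ (by omega), norm_zero, zero_div]
      have := h.Wpos hμ q
      positivity
  refine ⟨x, 2 * s * M, by nlinarith, fun i q hq => ?_, fun i q => ?_, fun l hl => ?_⟩
  · have := hx1 i q hq
    exact ⟨by omega, this.2.2.2.2⟩
  · by_cases hq : x i q = 0
    · rw [hq, norm_zero]; positivity
    · obtain ⟨a1, a2, a3, a4, a5⟩ := hx1 i q hq
      have hμ := hSK _ (g1 _ a2).2 i
      have hlow := h.low q (by omega) _ hμ
      have hmr : (m : ℝ) ≠ 0 := by exact_mod_cast hm
      apply le_of_pow_le_pow_left₀ hm (by positivity)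
      refine (hx3 i q a1 a2).trans ?_
      rw [mul_pow, ← Real.exp_nat_mul]
      have e2 : (m : ℝ) * -(D₃ / m * (q : ℝ) ^ α) = -(D₃ * (q : ℝ) ^ α) := by field_simp
      rw [e2]
      calc Y * CW / Wp w (μ (q / s - M) i) q ≤ Y * CW / (D₂ * Real.exp (D₃ * (q : ℝ) ^ α)) := by
            gcongr
        _ = C₁ * Real.exp (-(D₃ * (q : ℝ) ^ α)) := by
            rw [Real.exp_neg, hC1]; field_simp
        _ ≤ _ := by
            gcongr
            calc C₁ ≤ max 1 C₁ := le_max_right _ _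
              _ ≤ (max 1 C₁) ^ m := le_self_pow₀ (le_max_left _ _) hm
  · obtain ⟨t, ht, htl⟩ := g2 l hl
    have htM := (g1 t ht).1
    refine ⟨s * (M + t), ?_, ?_, fun i j => ?_⟩
    · have : s * M ≤ s * (M + t) := Nat.mul_le_mul_left _ (by omega)
      omega
    · calc s * (M + t) ≤ s * (2 * M) := Nat.mul_le_mul_left _ (by omega)
        _ = 2 * s * M := by ring
    have hlK := hSK l hl i
    set q := j + s * (M + t) with hq
    have d1 : q / s = j / s + (M + t) := by rw [hq, Nat.add_mul_div_left _ _ hs0]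
    have d2 : q % s = j % s := by rw [hq, Nat.add_mul_mod_self_left]
    have d3 : q / s - M = t + j / s := by rw [d1]; generalize j / s = z; omega
    have d4 : M ≤ q / s := by rw [d1]; generalize j / s = z; omega
    by_cases hN : t + j / s ∈ Ns
    swap
    · have hx0 : x i q = 0 := by
        by_contra hne
        exact hN (d3 ▸ (hx1 i q hne).2.1)
      have hjs : j / s ≠ 0 := fun h0 => hN (by rw [h0]; exact ht)
      have hjs' : s ≤ j := by
        by_contra hlt
        exact hjs (Nat.div_eq_of_lt (by omega))
      rw [hx0, hy i j (by omega), zero_pow hm]; simpa using hε.le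
    have hμ' := hSK _ (g1 _ hN).2 i
    have hqN : N ≤ q := by
      have : s * 1 ≤ s * (M + t) := Nat.mul_le_mul_left _ (by omega)
      omega
    have hq2 : q < 2 * s * M := by
      have := (g1 _ hN).1
      have h5 : q / s + 1 ≤ 2 * M := by omega
      calc q < s * (q / s + 1) := Nat.lt_mul_div_succ q hs0
        _ ≤ s * (2 * M) := Nat.mul_le_mul_left _ h5
        _ = 2 * s * M := by ring
    have hqα : (q : ℝ) ^ α ≤ (2 * s * (M : ℝ)) ^ α :=
      Real.rpow_le_rpow (by positivity) (by exact_mod_cast hq2.le) hα.le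
    have hlip1 : D₁ * (q : ℝ) ^ α * |l i - μ t i| ≤ η := by
      refine le_trans ?_ hH2
      have := htl i
      gcongr
    have hWadd : Real.log (Vp w (l i) j (s * (M + t))) =
        Real.log (Wp w (l i) q) - Real.log (Wp w (l i) j) := h.logV hlK _ _
    have hVl := h.Vpos hlK j (s * (M + t))
    by_cases hjs : j / s = 0
    · have hjs' : j < s := by
        rcases (Nat.div_eq_zero_iff).1 hjs with h0 | h0 <;> omega
      rw [hx2 i q d4 (d3 ▸ hN), d3, d2, d1, hjs, Nat.mod_eq_of_lt hjs', zero_add, add_zero]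
      by_cases hjp : j < p
      swap
      · rw [hy i j (by omega)]; simpa using hε.le
      rw [hjs, add_zero] at hμ'
      have hVm := h.Vpos hμ' j (s * (M + t))
      have e1 : (Vp w (l i) j (s * (M + t)) : ℂ) * (y i j / (Vp w (μ t i) j (s * (M + t)) : ℂ))
          - y i j = ((Vp w (l i) j (s * (M + t)) / Vp w (μ t i) j (s * (M + t)) - 1 : ℝ) : ℂ)
            * y i j := by
        push_cast; ring
      rw [e1, norm_mul, Complex.norm_real, Real.norm_eq_abs]
      have e2 := Real.exp_log (div_pos hVl hVm)
      rw [Real.log_div hVl.ne' hVm.ne', hWadd, h.logV hμ' j (s * (M + t))] at e2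
      rw [← e2]
      have b1 := h.lip q hqN _ hlK _ hμ'
      have b2 := hH1 j (Finset.mem_range.2 hjp) _ hlK _ hμ' (htl i)
      have b3 : |Real.log (Wp w (l i) q) - Real.log (Wp w (l i) j) -
          (Real.log (Wp w (μ t i) q) - Real.log (Wp w (μ t i) j))| ≤ 2 * η := by
        rw [abs_le] at *
        constructor <;> linarith
      have b4 := Real.abs_exp_sub_one_le (b3.trans (by linarith))
      calc _ ≤ (4 * η) * Y := by
            apply mul_le_mul (b4.trans (by linarith)) (hY i j) (norm_nonneg _) (by linarith)
        _ ≤ ε := hη2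
    · have hj1 : 1 ≤ j / s := Nat.pos_of_ne_zero hjs
      have hsj : s ≤ j := by
        by_contra hlt
        exact hjs (Nat.div_eq_of_lt (by omega))
      rw [hy i j (by omega), sub_zero, norm_mul, Complex.norm_real,
        Real.norm_of_nonneg hVl.le, norm_pow]
      have hx := hx3 i q d4 (d3 ▸ hN)
      rw [d3] at hx
      set ν := μ (t + j / s) i with hν
      have hWν := h.Wpos hμ' q
      have hWl := h.Wpos hlK q
      have hWj := h.Wpos hlK j
      have hjr0 : (0 : ℝ) ≤ (j : ℝ) ^ α := by positivity
      -- distance between centers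
      have c1 := g3 t ht _ hN (by omega) i
      rw [Nat.cast_add, add_sub_cancel_left] at c1
      have c2 : (q : ℝ) ^ α * (((j / s : ℕ) : ℝ) / M) ^ α ≤ 2 * (j : ℝ) ^ α := by
        rw [← Real.mul_rpow (by positivity) (by positivity)]
        calc ((q : ℝ) * (((j / s : ℕ) : ℝ) / M)) ^ α ≤ (2 * (j : ℝ)) ^ α := by
              apply Real.rpow_le_rpow (by positivity) _ hα.le
              have e3 : (s : ℝ) * ((j / s : ℕ) : ℝ) ≤ j := by exact_mod_cast Nat.mul_div_le j s
              have e4 : (q : ℝ) ≤ 2 * s * M := by exact_mod_cast hq2.le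
              calc (q : ℝ) * (((j / s : ℕ) : ℝ) / M) ≤ 2 * s * M * (((j / s : ℕ) : ℝ) / M) := by
                    gcongr
                _ = 2 * (s * ((j / s : ℕ) : ℝ)) := by field_simp
                _ ≤ _ := by linarith
          _ = 2 ^ α * (j : ℝ) ^ α := Real.mul_rpow (by norm_num) (by positivity)
          _ ≤ 2 ^ (1 : ℝ) * (j : ℝ) ^ α := by
              gcongr
              norm_num
          _ = _ := by rw [Real.rpow_one]
      have c3 : D₁ * (q : ℝ) ^ α * |l i - ν| ≤ 1 + D₃ / 2 * (j : ℝ) ^ α := by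
        have tri : |l i - ν| ≤ |l i - μ t i| + |μ t i - ν| := abs_sub_le _ _ _
        calc D₁ * (q : ℝ) ^ α * |l i - ν|
            ≤ D₁ * (q : ℝ) ^ α * (|l i - μ t i| + |μ t i - ν|) := by gcongr
          _ = D₁ * (q : ℝ) ^ α * |l i - μ t i| + D₁ * (q : ℝ) ^ α * |μ t i - ν| := by ring
          _ ≤ η + D₁ * (q : ℝ) ^ α * (ρ * b * (((j / s : ℕ) : ℝ) / M) ^ α) := by
              gcongr
          _ = η + D₁ * ρ * b * ((q : ℝ) ^ α * (((j / s : ℕ) : ℝ) / M) ^ α) := by ring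
          _ ≤ η + D₁ * ρ * b * (2 * (j : ℝ) ^ α) := by gcongr
          _ ≤ 1 + D₃ / 2 * (j : ℝ) ^ α := by nlinarith
      have c4 := (abs_le.1 (h.lip q hqN _ hlK _ hμ')).2
      have c5 : Wp w (l i) q / Wp w ν q ≤ Real.exp (1 + D₃ / 2 * (j : ℝ) ^ α) := by
        rw [← Real.log_le_iff_le_exp (div_pos hWl hWν), Real.log_div hWl.ne' hWν.ne']
        linarith
      have c6 : Vp w (l i) j (s * (M + t)) = Wp w (l i) q / Wp w (l i) j := by
        rw [hq, Wp_add]; field_simp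
      have c7 := h.low j (by omega) _ hlK
      have c8 : (s : ℝ) ^ α ≤ (j : ℝ) ^ α :=
        Real.rpow_le_rpow (by positivity) (by exact_mod_cast hsj) hα.le
      calc Vp w (l i) j (s * (M + t)) * ‖x i q‖ ^ m
          ≤ Vp w (l i) j (s * (M + t)) * (Y * CW / Wp w ν q) := by gcongr
        _ = (Wp w (l i) q / Wp w ν q) * (Y * CW) / Wp w (l i) j := by rw [c6]; ring
        _ ≤ Real.exp (1 + D₃ / 2 * (j : ℝ) ^ α) * (Y * CW) /
            (D₂ * Real.exp (D₃ * (j : ℝ) ^ α)) := by gcongr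
        _ = C₁ * Real.exp 1 * Real.exp (-(D₃ / 2 * (j : ℝ) ^ α)) := by
            have e6 : D₃ * (j : ℝ) ^ α = D₃ / 2 * (j : ℝ) ^ α + D₃ / 2 * (j : ℝ) ^ α := by ring
            rw [e6, Real.exp_add, Real.exp_add, Real.exp_neg, hC1]; field_simp
        _ ≤ C₁ * Real.exp 1 * Real.exp (-(D₃ / 2 * (s : ℝ) ^ α)) := by gcongr
        _ ≤ ε := hs1

end
lemma glue {d : ℕ} {w : ℝ → ℕ → ℝ} {α : ℝ} (hα : 0 < α) (S : ℕ → Set (Fin d → ℝ))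
    (K : ℕ → Set ℝ) (hSK : ∀ t, ∀ l ∈ S t, ∀ i, l i ∈ K t)
    (hK : ∀ t, ∃ D₁ D₂ D₃ N, Crit w α (K t) D₁ D₂ D₃ N) (m : ℕ → ℕ) (hm : ∀ t, m t ≠ 0)
    (y : ℕ → Fin d → ℕ → ℂ)
    (hblock : ∀ t, ∃ C > 0, ∃ c > 0, ∀ ε > 0, ∀ A₀ : ℕ, ∃ (x : Fin d → ℕ → ℂ) (B : ℕ), A₀ < B ∧
      (∀ i q, x i q ≠ 0 → A₀ ≤ q ∧ q < B) ∧
      (∀ i q, ‖x i q‖ ≤ C * Real.exp (-(c * (q : ℝ) ^ α))) ∧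
      ∀ l ∈ S t, ∃ n, A₀ ≤ n ∧ n ≤ B ∧ ∀ i j,
        ‖(Vp w (l i) j n : ℂ) * x i (j + n) ^ m t - y t i j‖ ≤ ε) :
    ∃ (x : Fin d → ℕ → ℂ) (Bs : ℕ → ℕ), (∀ t, t ≤ Bs t) ∧
      (∀ (t : ℕ) i q, Bs t ≤ q → ‖x i q‖ ≤ 1 / ((t : ℝ) + 1)) ∧
      ∀ t, ∀ l ∈ S t, ∃ n, Bs t ≤ n ∧ ∀ i j,
        ‖(Vp w (l i) j n : ℂ) * x i (j + n) ^ m t - y t i j‖ ≤ 2 / ((t : ℝ) + 1) := by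
  have hVnn : ∀ t, ∀ a ∈ K t, ∀ j n, 0 ≤ Vp w a j n := by
    intro t a ha j n
    obtain ⟨_, _, _, _, h⟩ := hK t
    exact (h.Vpos ha j n).le
  have step : ∀ t B' : ℕ, ∃ (x : Fin d → ℕ → ℂ) (B : ℕ), B' < B ∧
      (∀ i q, x i q ≠ 0 → B' ≤ q ∧ q < B) ∧
      (∀ i q, ‖x i q‖ ≤ 1 / ((t : ℝ) + 1)) ∧
      (∀ s ∈ range t, ∀ n ∈ range (B' + 1), ∀ q, n ≤ q → ∀ a ∈ K s, ∀ i,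
        Vp w a (q - n) n * ‖x i q‖ ^ m s ≤ 1 / ((t : ℝ) + 1)) ∧
      ∀ l ∈ S t, ∃ n, B' ≤ n ∧ n ≤ B ∧ ∀ i j,
        ‖(Vp w (l i) j n : ℂ) * x i (j + n) ^ m t - y t i j‖ ≤ 1 / ((t : ℝ) + 1) := by
    intro t B'
    obtain ⟨C, hC, c, hc, hb⟩ := hblock t
    have hε : (0 : ℝ) < 1 / ((t : ℝ) + 1) := by positivity
    have hqt : Filter.Tendsto (fun q : ℕ => (q : ℝ) ^ α) Filter.atTop Filter.atTop :=
      (tendsto_rpow_atTop hα).comp tendsto_natCast_atTop_atTop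
    have hexp : ∀ (C' c' : ℝ), 0 < c' →
        Filter.Tendsto (fun s : ℕ => C' * Real.exp (-(c' * (s : ℝ) ^ α)))
        Filter.atTop (nhds 0) := by
      intro C' c' hc'
      rw [← mul_zero C']
      apply Filter.Tendsto.const_mul
      exact Real.tendsto_exp_neg_atTop_nhds_zero.comp (hqt.const_mul_atTop hc')
    have ev1 : ∀ᶠ q : ℕ in Filter.atTop, C * Real.exp (-(c * (q : ℝ) ^ α)) ≤ 1 / ((t : ℝ) + 1) :=
      (hexp C c hc).eventually_le_const hε
    have ev2 : ∀ᶠ q : ℕ in Filter.atTop, ∀ s ∈ range t, ∀ n ∈ range (B' + 1), ∀ a ∈ K s,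
        Vp w a (q - n) n * (C * Real.exp (-(c * (q : ℝ) ^ α))) ^ m s ≤ 1 / ((t : ℝ) + 1) := by
      rw [Filter.eventually_all_finset]
      intro s _
      rw [Filter.eventually_all_finset]
      intro n _
      obtain ⟨_, _, _, _, hKs⟩ := hK s
      filter_upwards [hKs.subexp hα n (c / 2) (by positivity),
        (hexp (C ^ m s) (c / 2) (by positivity)).eventually_le_const hε] with q hq1 hq2 a ha
      refine le_trans ?_ hq2
      rw [mul_pow, ← Real.exp_nat_mul]
      have hm1 : (1 : ℝ) ≤ m s := by exact_mod_cast Nat.one_le_iff_ne_zero.2 (hm s)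
      have hq0 : 0 ≤ c * (q : ℝ) ^ α := by positivity
      calc Vp w a (q - n) n * (C ^ m s * Real.exp (m s * -(c * (q : ℝ) ^ α)))
          ≤ Real.exp (c / 2 * (q : ℝ) ^ α) * (C ^ m s * Real.exp (-(c * (q : ℝ) ^ α))) := by
            have := hq1 a ha
            gcongr
            nlinarith
        _ = C ^ m s * Real.exp (-(c / 2 * (q : ℝ) ^ α)) := by
            rw [mul_left_comm, ← Real.exp_add]; congr 2; ring
    obtain ⟨Q, hQ⟩ := Filter.eventually_atTop.1 (ev1.and ev2)
    obtain ⟨x, B, h1, h2, h3, h4⟩ := hb _ hε (max Q B')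
    have hcase : ∀ i q, x i q = 0 ∨ Q ≤ q := by
      intro i q
      by_cases h0 : x i q = 0
      · exact Or.inl h0
      · exact Or.inr ((le_max_left _ _).trans (h2 i q h0).1)
    refine ⟨x, B, (le_max_right _ _).trans_lt h1,
      fun i q h0 => ⟨(le_max_right _ _).trans (h2 i q h0).1, (h2 i q h0).2⟩, ?_, ?_, ?_⟩
    · intro i q
      rcases hcase i q with h0 | h0
      · rw [h0, norm_zero]; exact hε.le
      · exact (h3 i q).trans (hQ q h0).1
    · intro s hs n hn q _ a ha i
      rcases hcase i q with h0 | h0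
      · rw [h0, norm_zero, zero_pow (hm s), mul_zero]; exact hε.le
      · refine le_trans ?_ ((hQ q h0).2 s hs n hn a ha)
        have := hVnn s a ha (q - n) n
        have := h3 i q
        gcongr
    · intro l hl
      obtain ⟨n, hn1, hn2, hn3⟩ := h4 l hl
      exact ⟨n, (le_max_right _ _).trans hn1, hn2, hn3⟩
  choose X Bf g1 g2 g3 g4 g5 using step
  obtain ⟨Bs, hB0, hBs⟩ : ∃ Bs : ℕ → ℕ, Bs 0 = 0 ∧ ∀ t, Bs (t + 1) = Bf t (Bs t) :=
    ⟨fun t => Nat.rec (motive := fun _ => ℕ) 0 (fun t B => Bf t B) t, rfl, fun t => rfl⟩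
  have hmono : StrictMono Bs := strictMono_nat_of_lt_succ fun t => by
    rw [hBs]; exact g1 t (Bs t)
  let τ : ℕ → ℕ := fun q => Nat.findGreatest (fun t : ℕ => Bs t ≤ q) q
  have hτ1 : ∀ q, Bs (τ q) ≤ q := fun q =>
    Nat.findGreatest_spec (P := fun t : ℕ => Bs t ≤ q) (m := 0) (n := q) (Nat.zero_le q)
      (hB0.le.trans (Nat.zero_le q))
  have hτ2 : ∀ q t, Bs t ≤ q → t ≤ τ q := fun q t ht =>
    Nat.le_findGreatest (P := fun t : ℕ => Bs t ≤ q) ((hmono.id_le t).trans ht) ht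
  have hinv : ∀ t t' : ℕ, t ≤ t' → 1 / ((t' : ℝ) + 1) ≤ 1 / ((t : ℝ) + 1) := by
    intro t t' htt
    have : (t : ℝ) ≤ t' := by exact_mod_cast htt
    gcongr
  refine ⟨fun i q => X (τ q) (Bs (τ q)) i q, Bs, hmono.id_le, ?_, ?_⟩
  · intro t i q hq
    exact (g3 _ _ i q).trans (hinv _ _ (hτ2 q t hq))
  · intro t l hl
    obtain ⟨n, hn1, hn2, hn3⟩ := g5 t (Bs t) l hl
    refine ⟨n, hn1, fun i j => ?_⟩
    have hle := hτ2 (j + n) t (by omega)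
    have hε : (0 : ℝ) < 1 / ((t : ℝ) + 1) := by positivity
    have h2 : 2 / ((t : ℝ) + 1) = 1 / ((t : ℝ) + 1) + 1 / ((t : ℝ) + 1) := by ring
    rw [h2]
    rcases hle.eq_or_lt with heq | hlt
    · simp only [← heq]
      linarith [hn3 i j]
    · have hq1 := hτ1 (j + n)
      set t' := τ (j + n) with ht'
      have hB : Bs (t + 1) ≤ Bs t' := hmono.monotone hlt
      have hz : X t (Bs t) i (j + n) = 0 := by
        by_contra hne
        have := (g2 t (Bs t) i _ hne).2
        rw [← hBs] at this; omega
      have hy := hn3 i j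
      rw [hz, zero_pow (hm t), mul_zero, zero_sub, norm_neg] at hy
      have hv := g4 t' (Bs t') t (Finset.mem_range.2 hlt) n
        (Finset.mem_range.2 (by rw [← hBs] at hn2; omega)) (j + n) (by omega) (l i)
        (hSK t l hl i) i
      rw [Nat.add_sub_cancel] at hv
      refine (norm_sub_le _ _).trans (add_le_add ?_ hy)
      rw [norm_mul, Complex.norm_real, Real.norm_of_nonneg (hVnn t _ (hSK t l hl i) _ _), norm_pow]
      exact hv.trans (hinv _ _ hle)

/-- Countable dense family of finitely supported vectors. -/
def yy {d : ℕ} (c : Σ p : ℕ, (Fin d → Fin p → ℕ)) (i : Fin d) (j : ℕ) : ℂ :=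
  if h : j < c.1 then TopologicalSpace.denseSeq ℂ (c.2 i ⟨j, h⟩) else 0

lemma c0_tendsto (z : c0C) : Filter.Tendsto z Filter.atTop (nhds 0) := by
  have := z.zero_at_infty'
  rwa [cocompact_eq_atTop] at this

lemma yy_approx {d : ℕ} (z : Fin d → c0C) (δ : ℝ) (hδ : 0 < δ) :
    ∃ c : Σ p : ℕ, (Fin d → Fin p → ℕ), ∀ i j, ‖yy c i j - z i j‖ ≤ δ := by
  have h1 : ∀ᶠ p : ℕ in Filter.atTop, ∀ i, ‖z i p‖ ≤ δ := by
    rw [Filter.eventually_all]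
    intro i
    have := (c0_tendsto (z i)).norm
    rw [norm_zero] at this
    exact this.eventually_le_const hδ
  obtain ⟨p, hp⟩ := Filter.eventually_atTop.1 h1
  have h2 : ∀ (i : Fin d) (j : Fin p), ∃ k, ‖TopologicalSpace.denseSeq ℂ k - z i j‖ ≤ δ := by
    intro i j
    obtain ⟨k, hk⟩ := (TopologicalSpace.denseRange_denseSeq ℂ).exists_dist_lt (z i j) hδ
    rw [dist_comm, dist_eq_norm] at hk
    exact ⟨k, hk.le⟩
  choose f hf using h2
  refine ⟨⟨p, f⟩, fun i j => ?_⟩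
  unfold yy
  split_ifs with h
  · exact hf i ⟨j, h⟩
  · rw [zero_sub, norm_neg]; exact hp j (by simpa using h) i

lemma c0_dist_le (u v : c0C) (ε : ℝ) (hε : 0 ≤ ε) (h : ∀ j, ‖u j - v j‖ ≤ ε) : dist u v ≤ ε := by
  rw [← ZeroAtInftyContinuousMap.dist_toBCF_eq_dist, BoundedContinuousFunction.dist_le hε]
  intro j
  rw [dist_eq_norm]; exact h j

lemma poly_factor (P : Polynomial ℂ) (hP : P ≠ 0) (h0 : P.coeff 0 = 0) :
    ∃ (m : ℕ) (Q : Polynomial ℂ), Q.eval 0 ≠ 0 ∧ ∀ z, P.eval z = z ^ (m + 1) * Q.eval z := by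
  obtain ⟨Q, hQ, hnd⟩ := Polynomial.exists_eq_pow_rootMultiplicity_mul_and_not_dvd P hP 0
  have hr : P.rootMultiplicity 0 ≠ 0 := by
    rw [Polynomial.coeff_zero_eq_eval_zero] at h0
    exact ((Polynomial.rootMultiplicity_pos hP).2 h0).ne'
  obtain ⟨m, hm⟩ := Nat.exists_eq_succ_of_ne_zero hr
  refine ⟨m, Q, ?_, fun z => ?_⟩
  · intro h
    exact hnd (Polynomial.dvd_iff_isRoot.2 h)
  · rw [hm] at hQ
    rw [hQ]; simp

lemma mk_crit {w : ℝ → ℕ → ℝ} {α : ℝ} {K : Set ℝ} (hKc : IsCompact K)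
    (hwpos : ∀ a ∈ K, ∀ n : ℕ, 1 ≤ n → 0 < w a n)
    (hwbdd : ∀ a ∈ K, ∃ C : ℝ, ∀ n : ℕ, 1 ≤ n → w a n ≤ C)
    (hwcont : ∀ n : ℕ, ContinuousOn (fun a => w a n) K)
    (hcrit : ∃ D₁ > (0 : ℝ), ∃ D₂ > (0 : ℝ), ∃ D₃ > (0 : ℝ), ∃ N : ℕ, ∀ n : ℕ, N ≤ n →
        (∀ a ∈ K, ∀ b ∈ K,
          |(∑ i ∈ Finset.Icc 1 n, Real.log (w a i)) -
              ∑ i ∈ Finset.Icc 1 n, Real.log (w b i)| ≤ D₁ * (n : ℝ) ^ α * |a - b|) ∧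
        (∀ a ∈ K, D₂ * Real.exp (D₃ * (n : ℝ) ^ α) ≤ ∏ i ∈ Finset.Icc 1 n, w a i)) :
    ∃ D₁ D₂ D₃ N, Crit w α K D₁ D₂ D₃ N := by
  obtain ⟨D₁, h1, D₂, h2, D₃, h3, N, h⟩ := hcrit
  refine ⟨D₁, D₂, D₃, N, hKc, hwpos, hwbdd, hwcont, h1, h2, h3, ?_, fun n hn => (h n hn).2⟩
  intro n hn a ha b hb
  have hl : ∀ a ∈ K, Real.log (Wp w a n) = ∑ i ∈ Finset.Icc 1 n, Real.log (w a i) := by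
    intro a ha
    unfold Wp
    rw [Real.log_prod]
    intro i hi
    exact (hwpos a ha i (Finset.mem_Icc.1 hi).1).ne'
  rw [hl a ha, hl b hb]
  exact (h n hn).1 a ha b hb
/-- Corollary 1.1 of the paper (case `X = c₀(ℕ)`). -/
theorem stmt_1 (d : ℕ) (hd : 1 ≤ d)
    (α : ℝ) (hα0 : 0 < α) (hα1 : α < 1 / (d : ℝ))
    (I : Set ℝ) (hIpos : ∀ a ∈ I, 0 < a) (hIσ : IsSigmaCompact I)
    (w : ℝ → ℕ → ℝ)
    (hwpos : ∀ a ∈ I, ∀ n : ℕ, 1 ≤ n → 0 < w a n)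
    (hwbdd : ∀ a ∈ I, ∃ C : ℝ, ∀ n : ℕ, 1 ≤ n → w a n ≤ C)
    (hwcont : ∀ n : ℕ, ContinuousOn (fun a => w a n) I)
    (hcrit : ∀ I₀ ⊆ I, IsCompact I₀ →
      ∃ D₁ > (0 : ℝ), ∃ D₂ > (0 : ℝ), ∃ D₃ > (0 : ℝ), ∃ N : ℕ, ∀ n : ℕ, N ≤ n →
        (∀ a ∈ I₀, ∀ b ∈ I₀,
          |(∑ i ∈ Finset.Icc 1 n, Real.log (w a i)) -
              ∑ i ∈ Finset.Icc 1 n, Real.log (w b i)| ≤ D₁ * (n : ℝ) ^ α * |a - b|) ∧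
        (∀ a ∈ I₀, D₂ * Real.exp (D₃ * (n : ℝ) ^ α) ≤ ∏ i ∈ Finset.Icc 1 n, w a i))
    (T : (Fin d → ℝ) → ((Fin d → c0C) →L[ℂ] (Fin d → c0C)))
    (hT : ∀ lam : Fin d → ℝ, (∀ i, lam i ∈ I) → IsProductShiftC0 d w (T lam) lam) :
    CommonHypercyclicAlgebraCWC0 d {lam | ∀ i, lam i ∈ I} T := by
  classical
  have hd0 : (1 : ℝ) ≤ d := by exact_mod_cast hd
  have hαle : α ≤ 1 := hα1.le.trans (by rw [div_le_one (by linarith)]; exact hd0)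
  by_cases hI : I.Nonempty
  swap
  · rw [Set.not_nonempty_iff_eq_empty] at hI
    let e : c0C := ⟨⟨fun n => if n = 0 then 1 else 0, continuous_of_discreteTopology⟩, by
      rw [cocompact_eq_atTop]
      apply tendsto_const_nhds.congr'
      filter_upwards [Filter.eventually_ge_atTop 1] with n hn
      simp [show n ≠ 0 by omega]⟩
    refine ⟨Set.univ, trivial, fun _ _ _ _ => trivial, fun _ _ _ => trivial,
      fun x _ y _ => ⟨x * y, trivial, fun i n => rfl⟩, ⟨fun _ => e, trivial, fun h => ?_⟩, ?_⟩
    · have h1 : e 0 = (0 : c0C) 0 := by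
        rw [congrFun h ⟨0, hd⟩]; rfl
      simp [e] at h1
    · intro x _ _ lam hlam
      have := hlam ⟨0, hd⟩
      rw [hI] at this
      exact absurd this (Set.notMem_empty _)
  obtain ⟨b, hb, hβ⟩ := exists_base d hd α hα1
  have hb0 : (0 : ℝ) < b := by exact_mod_cast hb
  obtain ⟨K0, hK0c, hK0⟩ := hIσ
  have hKI : ∀ J, Set.accumulate K0 J ⊆ I := fun J => by
    rw [← hK0]; exact Set.accumulate_subset_iUnion J
  have hKc : ∀ J, IsCompact (Set.accumulate K0 J) := isCompact_accumulate hK0c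
  have hC : ∀ J, ∃ D₁ D₂ D₃ N, Crit w α (Set.accumulate K0 J) D₁ D₂ D₃ N := fun J =>
    mk_crit (hKc J) (fun a ha => hwpos a (hKI J ha)) (fun a ha => hwbdd a (hKI J ha))
      (fun n => (hwcont n).mono (hKI J)) (hcrit _ (hKI J) (hKc J))
  have hC' := hC
  choose D₁ D₂ D₃ N hCr using hC'
  let r : ℕ → ℝ := fun J => D₃ J / (4 * D₁ J * b)
  have hr : ∀ J, 0 < r J := fun J => by
    have := (hCr J).h1
    have := (hCr J).h3
    positivity
  have hr2 : ∀ J, 4 * D₁ J * b * r J ≤ D₃ J := fun J => by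
    have := (hCr J).h1
    simp only [r]
    apply le_of_eq; field_simp
  obtain ⟨task, htask⟩ := exists_surjective_nat
    (ℕ × (Fin d → ℤ) × ℕ × (Σ p : ℕ, (Fin d → Fin p → ℕ)))
  let tk := fun t : ℕ => task (Nat.unpair t).1
  let S0 : ℕ → (Fin d → ℤ) → Set (Fin d → ℝ) := fun J k =>
    {l | ∀ i, l i ∈ Set.accumulate K0 J ∧ (k i * r J ≤ l i ∧ l i ≤ k i * r J + r J)}
  obtain ⟨x, Bs, hBs, hx1, hx2⟩ := glue hα0 (fun t => S0 (tk t).1 (tk t).2.1)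
    (fun t => Set.accumulate K0 (tk t).1) (fun t l hl i => (hl i).1) (fun t => hC _)
    (fun t => (tk t).2.2.1 + 1) (fun t => Nat.succ_ne_zero _) (fun t => yy (tk t).2.2.2)
    (fun t => (hCr (tk t).1).block hα0 hαle d b hb hβ (fun i => (tk t).2.1 i * r (tk t).1)
      (r (tk t).1) (hr _) (hr2 _) _ (fun l hl i => (hl i).1) (fun l hl i => (hl i).2)
      _ (Nat.succ_ne_zero _) _ (tk t).2.2.2.1
      (fun i j hj => by unfold yy; rw [dif_neg (by omega)]))
  -- usable form
  have use : ∀ lam : Fin d → ℝ, (∀ i, lam i ∈ I) → ∀ (m : ℕ)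
      (c : Σ p : ℕ, (Fin d → Fin p → ℕ)) (t0 : ℕ), ∃ t n : ℕ, t0 ≤ t ∧ Bs t ≤ n ∧ ∀ i j,
      ‖(Vp w (lam i) j n : ℂ) * x i (j + n) ^ (m + 1) - yy c i j‖ ≤ 2 / ((t : ℝ) + 1) := by
    intro lam hlam m c t0
    have : ∀ i, ∃ J, lam i ∈ K0 J := fun i => by
      have := hlam i
      rw [← hK0] at this
      simpa using this
    choose Ji hJi using this
    let J := Finset.univ.sup Ji
    have hJ : ∀ i, lam i ∈ Set.accumulate K0 J := fun i =>
      Set.mem_accumulate.2 ⟨Ji i, Finset.le_sup (Finset.mem_univ i), hJi i⟩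
    obtain ⟨a, ha⟩ := htask (J, fun i => ⌊lam i / r J⌋, m, c)
    have htk : tk (Nat.pair a t0) = (J, fun i => ⌊lam i / r J⌋, m, c) := by
      simp only [tk, Nat.unpair_pair, ha]
    obtain ⟨n, hn, hn2⟩ := hx2 (Nat.pair a t0) lam (by
      simp only [htk, S0]
      intro i
      refine ⟨hJ i, ?_, ?_⟩
      · have := Int.floor_le (lam i / r J)
        rwa [le_div_iff₀ (hr J)] at this
      · have := (Int.lt_floor_add_one (lam i / r J)).le
        rw [div_le_iff₀ (hr J)] at this
        linarith)
    refine ⟨Nat.pair a t0, n, Nat.right_le_pair a t0, hn, ?_⟩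
    simpa only [htk] using hn2
  let xs : Fin d → c0C := fun i => ⟨⟨fun q => x i q, continuous_of_discreteTopology⟩, by
    rw [cocompact_eq_atTop, Metric.tendsto_atTop]
    intro ε hε
    obtain ⟨t, ht⟩ := exists_nat_one_div_lt hε
    refine ⟨Bs t, fun q hq => ?_⟩
    rw [dist_zero_right]
    exact (hx1 t i q hq).trans_lt ht⟩
  have hxs : ∀ i q, xs i q = x i q := fun i q => rfl
  refine ⟨{v | ∃ P : Polynomial ℂ, P.coeff 0 = 0 ∧ ∀ i j, v i j = P.eval (x i j)},
    ⟨0, by simp, fun i j => by simp⟩, ?_, ?_, ?_, ?_, ?_⟩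
  · rintro u ⟨P, hP, hu⟩ v ⟨Q, hQ, hv⟩
    refine ⟨P + Q, by simp [hP, hQ], fun i j => ?_⟩
    rw [Polynomial.eval_add, ← hu, ← hv]; rfl
  · rintro c u ⟨P, hP, hu⟩
    refine ⟨Polynomial.C c * P, by simp [hP], fun i j => ?_⟩
    rw [Polynomial.eval_mul, Polynomial.eval_C, ← hu]; rfl
  · rintro u ⟨P, hP, hu⟩ v ⟨Q, hQ, hv⟩
    refine ⟨u * v, ⟨P * Q, by simp [hP], fun i j => ?_⟩, fun i n => rfl⟩
    rw [Polynomial.eval_mul, ← hu, ← hv]; rfl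
  · refine ⟨xs, ⟨Polynomial.X, by simp, fun i j => by simp [hxs]⟩, fun h0 => ?_⟩
    obtain ⟨a, ha⟩ := hI
    obtain ⟨k, hk⟩ := (TopologicalSpace.denseRange_denseSeq ℂ).exists_dist_lt (2 : ℂ)
      (by norm_num : (0 : ℝ) < 1 / 2)
    obtain ⟨t, n, ht, _, h⟩ := use (fun _ => a) (fun _ => ha) 0 ⟨1, fun _ _ => k⟩ 1
    have h1 := h ⟨0, hd⟩ 0
    rw [← hxs, h0] at h1
    simp only [yy, Pi.zero_apply, ZeroAtInftyContinuousMap.coe_zero, zero_add, pow_one, mul_zero,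
      zero_sub, norm_neg, Nat.lt_one_iff, dite_true] at h1
    have ht1 : (1 : ℝ) ≤ t := by exact_mod_cast ht
    have h2 : 2 / ((t : ℝ) + 1) ≤ 1 := by rw [div_le_one (by linarith)]; linarith
    rw [dist_eq_norm] at hk
    have h3 := norm_sub_norm_le (2 : ℂ) (TopologicalSpace.denseSeq ℂ k)
    have h4 : ‖(2 : ℂ)‖ = 2 := by simp
    linarith
  · rintro v ⟨P, hP, hv⟩ hv0 lam hlam
    have hP0 : P ≠ 0 := by
      rintro rfl
      apply hv0
      funext i
      ext j
      rw [hv]; simp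
    obtain ⟨m, Q, hQ0, hPQ⟩ := poly_factor P hP0 hP
    rw [Metric.dense_iff]
    intro z ε hε
    set c0 := Q.eval 0 with hc0
    have hc : 0 < ‖c0‖ := norm_pos_iff.2 hQ0
    obtain ⟨c, hcz⟩ := yy_approx (c0⁻¹ • z) (ε / (4 * ‖c0‖)) (by positivity)
    obtain ⟨Y, hY0, hY⟩ := exists_y_bound (yy c) c.1
      (fun i j hj => by unfold yy; rw [dif_neg (by omega)])
    have hQc : Filter.Tendsto (fun z => Q.eval z) (nhds 0) (nhds c0) :=
      Q.continuous.tendsto 0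
    obtain ⟨δ, hδ, hQδ⟩ := (Metric.tendsto_nhds_nhds.1 hQc) (ε / (4 * (Y + 2))) (by positivity)
    obtain ⟨t1, ht1⟩ := exists_nat_one_div_lt hδ
    obtain ⟨t2, ht2⟩ := exists_nat_one_div_lt (show 0 < ε / (8 * ‖c0‖) by positivity)
    obtain ⟨t, n, ht, hn, hmain⟩ := use lam hlam m c (t1 + t2 + 1)
    have hinv : ∀ s : ℕ, s ≤ t → 1 / ((t : ℝ) + 1) ≤ 1 / ((s : ℝ) + 1) := by
      intro s hs
      have : (s : ℝ) ≤ t := by exact_mod_cast hs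
      gcongr
    have hn1 : n - 1 + 1 = n := by
      have := hBs t
      omega
    refine ⟨(T lam ^ (n - 1 + 1)) v, ?_, ⟨n - 1, rfl⟩⟩
    rw [hn1, Metric.mem_ball]
    refine lt_of_le_of_lt ((dist_pi_le_iff (by positivity : 0 ≤ 3 * ε / 4)).2 fun i => ?_)
      (by linarith)
    refine c0_dist_le _ _ _ (by positivity) fun j => ?_
    rw [T_pow d w (T lam) lam (hT lam hlam), hv, hPQ]
    have a1 := hmain i j
    set g : ℂ := (Vp w (lam i) j n : ℂ) * x i (j + n) ^ (m + 1) with hg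
    have hsmall : dist (x i (j + n)) 0 < δ := by
      rw [dist_zero_right]
      exact ((hx1 t i (j + n) (by omega)).trans (hinv t1 (by omega))).trans_lt ht1
    have a2 := (hQδ hsmall).le
    rw [dist_eq_norm] at a2
    have a3 := hcz i j
    have ez : (c0⁻¹ • z) i j = c0⁻¹ * z i j := rfl
    rw [ez] at a3
    have htle : 2 / ((t : ℝ) + 1) ≤ 2 := by
      rw [div_le_iff₀ (by positivity)]
      have : (0 : ℝ) ≤ t := by positivity
      linarith
    have a4 : ‖g‖ ≤ Y + 2 := by
      have e1 := norm_sub_norm_le g (yy c i j)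
      have e2 := hY i j
      linarith
    have a5 : 2 / ((t : ℝ) + 1) ≤ 2 * (ε / (8 * ‖c0‖)) := by
      have e1 := hinv t2 (by omega)
      have e2 : 2 / ((t : ℝ) + 1) = 2 * (1 / ((t : ℝ) + 1)) := by ring
      rw [e2]; linarith
    have e0 : (Vp w (lam i) j n : ℂ) * (x i (j + n) ^ (m + 1) * Q.eval (x i (j + n))) - z i j
        = g * (Q.eval (x i (j + n)) - c0) + c0 * (g - yy c i j)
          + c0 * (yy c i j - c0⁻¹ * z i j) := by
      have : c0 * (c0⁻¹ * z i j) = z i j := mul_inv_cancel_left₀ hQ0 _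
      rw [hg, mul_sub c0 (yy c i j), this]; ring
    rw [e0]
    have b1 : ‖g * (Q.eval (x i (j + n)) - c0)‖ ≤ ε / 4 := by
      rw [norm_mul]
      calc _ ≤ (Y + 2) * (ε / (4 * (Y + 2))) := by gcongr
        _ = ε / 4 := by field_simp
    have b2 : ‖c0 * (g - yy c i j)‖ ≤ ε / 4 := by
      rw [norm_mul]
      calc _ ≤ ‖c0‖ * (2 * (ε / (8 * ‖c0‖))) := by
            gcongr
            exact a1.trans a5
        _ = ε / 4 := by field_simp; norm_num
    have b3 : ‖c0 * (yy c i j - c0⁻¹ * z i j)‖ ≤ ε / 4 := by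
      rw [norm_mul]
      calc _ ≤ ‖c0‖ * (ε / (4 * ‖c0‖)) := by gcongr
        _ = ε / 4 := by field_simp
    refine (norm_add₃_le).trans ?_
    linarith
end
end
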